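/- arXiv:2106.14953 — 3 statements merged into one kernel-verified Lean document; each statement's English description precedes it below -/
import Mathlib

section
/- Fix an integer k ≥ 2. Then as x → ∞, the number of integers n with 1 ≤ n ≤ x such that n is not k-free but s(n) is k-free is o(x). (That is, almost always, if n is not k-free then s(n) is not k-free.) -/
open scoped Classical
open Filter Finset

/-- `sigma1 n` is `σ(n)`, the sum of all positive divisors of `n`. -/
def sigma1 (n : ℕ) : ℕ := ArithmeticFunction.sigma 1 n

/-- `s n` is the sum of the proper divisors of `n`, i.e. `σ(n) − n`. -/
def s (n : ℕ) : ℕ := sigma1 n - n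

/-- A positive integer `n` is `k`-free if no `k`-th power of a prime divides it. -/
def KFree (k n : ℕ) : Prop := ∀ p : ℕ, p.Prime → ¬ p ^ k ∣ n

/-!
If `p ^ k ∣ n` and `p ^ k ∣ σ(n)`, then `p ^ k ∣ s(n)`. So it is enough that almost every `n` has
the property that each `d ^ k` dividing `n` also divides `σ(n)`. Those `n` divisible by `d ^ 2` for
some `d > z` have upper density at most `1 / z`. For the finitely many `d ≤ z`, use that
a fixed modulus `m` divides `σ(n)` for almost every `n`: a prime `p ≡ -1 (mod m)` dividing `n`
exactly once contributes the factor `p + 1` to `σ(n)`, and since the reciprocals of these primes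
have a divergent sum, almost every `n` is exactly divisible by at least one of them.
-/

open ArithmeticFunction ArithmeticFunction.vonMangoldt
open scoped ENNReal Topology

section UpperDensity

/-- The upper asymptotic density `limsup |[1, N] ∩ S| / N` of a set of natural numbers. It takes
values in `ℝ≥0∞` so that the `limsup` needs no boundedness side conditions; a set has natural
density zero exactly when `upperDensity S = 0`. -/
noncomputable def upperDensity (S : Set ℕ) : ℝ≥0∞ :=
  limsup (fun N : ℕ ↦ ((Set.Icc 1 N ∩ S).ncard : ℝ≥0∞) / N) atTop

variable {S T : Set ℕ}

lemma upperDensity_mono (h : S ⊆ T) : upperDensity S ≤ upperDensity T :=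
  limsup_le_limsup <| .of_forall fun N ↦ ENNReal.div_le_div_right
    (mod_cast Set.ncard_le_ncard (Set.inter_subset_inter_right _ h)) _

lemma upperDensity_empty : upperDensity ∅ = 0 := by
  simp [upperDensity]

lemma tendsto_ncard_div_of_upperDensity_eq_zero (h : upperDensity S = 0) :
    Tendsto (fun N : ℕ ↦ ((Set.Icc 1 N ∩ S).ncard : ℝ≥0∞) / N) atTop (𝓝 0) :=
  tendsto_of_le_liminf_of_limsup_le bot_le h.le

lemma upperDensity_union_eq_left (hT : upperDensity T = 0) :
    upperDensity (S ∪ T) = upperDensity S := by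
  refine le_antisymm ?_ (upperDensity_mono Set.subset_union_left)
  refine (limsup_le_limsup <| .of_forall fun N ↦ ?_).trans_eq <|
    ENNReal.limsup_add_of_right_tendsto_zero (tendsto_ncard_div_of_upperDensity_eq_zero hT) _
  rw [Pi.add_apply, ← ENNReal.add_div, Set.inter_union_distrib_left]
  exact ENNReal.div_le_div_right (mod_cast Set.ncard_union_le _ _) _

lemma upperDensity_biUnion_eq_zero {ι : Type*} {I : Finset ι} {S : ι → Set ℕ}
    (h : ∀ i ∈ I, upperDensity (S i) = 0) : upperDensity (⋃ i ∈ I, S i) = 0 := by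
  induction I using Finset.induction_on with
  | empty => simp [upperDensity_empty]
  | insert i I _ ih =>
    rw [Finset.set_biUnion_insert,
      upperDensity_union_eq_left (ih fun j hj ↦ h j (mem_insert_of_mem hj))]
    exact h i (mem_insert_self i I)

lemma upperDensity_le_ofReal {a C : ℝ}
    (h : ∀ N : ℕ, ((Set.Icc 1 N ∩ S).ncard : ℝ) ≤ a * N + C) :
    upperDensity S ≤ ENNReal.ofReal a := by
  have hlim : Tendsto (fun N : ℕ ↦ ENNReal.ofReal (a + C / N)) atTop (𝓝 (ENNReal.ofReal a)) := by
    simpa using ENNReal.tendsto_ofReal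
      ((tendsto_const_div_atTop_nhds_zero_nat C).const_add a)
  rw [← hlim.limsup_eq]
  refine limsup_le_limsup ?_
  filter_upwards [eventually_gt_atTop 0] with N hN
  have hN' : (0 : ℝ) < N := mod_cast hN
  rw [← ENNReal.ofReal_natCast (Set.Icc 1 N ∩ S).ncard, ← ENNReal.ofReal_natCast N,
    ← ENNReal.ofReal_div_of_pos hN']
  refine ENNReal.ofReal_le_ofReal ?_
  rw [div_le_iff₀ hN', add_mul, div_mul_cancel₀ _ hN'.ne']
  exact h N

lemma upperDensity_eq_zero_of_forall_le_inv
    (h : ∀ z : ℕ, z ≠ 0 → upperDensity S ≤ ENNReal.ofReal (z : ℝ)⁻¹) : upperDensity S = 0 := by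
  have hlim : Tendsto (fun z : ℕ ↦ ENNReal.ofReal (z : ℝ)⁻¹) atTop (𝓝 0) := by
    simpa using ENNReal.tendsto_ofReal tendsto_inv_atTop_nhds_zero_nat
  exact nonpos_iff_eq_zero.mp <|
    ge_of_tendsto hlim ((eventually_ne_atTop 0).mono fun z hz ↦ h z hz)

lemma isLittleO_ncard_of_upperDensity_eq_zero (h : upperDensity S = 0) :
    (fun x : ℝ ↦ ((Set.Icc 1 ⌊x⌋₊ ∩ S).ncard : ℝ)) =o[atTop] fun x : ℝ ↦ x := by
  have hlim : Tendsto (fun N : ℕ ↦ ((Set.Icc 1 N ∩ S).ncard : ℝ) / N) atTop (𝓝 0) := by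
    simpa [ENNReal.toReal_div, Function.comp_def] using
      (ENNReal.tendsto_toReal ENNReal.zero_ne_top).comp
        (tendsto_ncard_div_of_upperDensity_eq_zero h)
  have ho : (fun N : ℕ ↦ ((Set.Icc 1 N ∩ S).ncard : ℝ)) =o[atTop] fun N : ℕ ↦ (N : ℝ) := by
    refine (Asymptotics.isLittleO_iff_tendsto fun N hN ↦ ?_).mpr hlim
    simp [Nat.cast_eq_zero.mp hN]
  refine (ho.comp_tendsto tendsto_nat_floor_atTop).trans_isBigO (.of_bound 1 ?_)
  filter_upwards [eventually_ge_atTop (0 : ℝ)] with x hx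
  simpa [abs_of_nonneg hx] using Nat.floor_le hx

end UpperDensity

section Sieve

lemma upperDensity_exists_sq_dvd_le {z : ℕ} (hz : z ≠ 0) :
    upperDensity {n | ∃ d, z < d ∧ d ^ 2 ∣ n} ≤ ENNReal.ofReal (z : ℝ)⁻¹ := by
  refine upperDensity_le_ofReal (C := 0) fun N ↦ ?_
  have hsub : Set.Icc 1 N ∩ {n | ∃ d, z < d ∧ d ^ 2 ∣ n} ⊆
      ((Ioc z N).biUnion fun d ↦ {n ∈ Ioc 0 N | d ^ 2 ∣ n} : Finset ℕ) := by
    rintro n ⟨hnN, d, hzd, hdn⟩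
    have hdn_le : d ≤ n := (Nat.le_self_pow two_ne_zero d).trans (Nat.le_of_dvd hnN.1 hdn)
    exact mem_biUnion.mpr ⟨d, mem_Ioc.mpr ⟨hzd, hdn_le.trans hnN.2⟩,
      mem_filter.mpr ⟨mem_Ioc.mpr hnN, hdn⟩⟩
  have hcard : (Set.Icc 1 N ∩ {n | ∃ d, z < d ∧ d ^ 2 ∣ n}).ncard ≤ ∑ d ∈ Ioc z N, N / d ^ 2 := by
    simpa only [Set.ncard_coe_finset, Nat.Ioc_filter_dvd_card_eq_div] using
      (Set.ncard_le_ncard hsub).trans ((Set.ncard_coe_finset _).trans_le card_biUnion_le)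
  have htail : ∑ d ∈ Ioc z N, ((d : ℝ) ^ 2)⁻¹ ≤ (z : ℝ)⁻¹ := by
    rcases le_total z N with h | h
    · exact (sum_Ioc_inv_sq_le_sub hz h).trans (sub_le_self _ (by positivity))
    · simp [Ioc_eq_empty_of_le h]
  calc ((Set.Icc 1 N ∩ {n | ∃ d, z < d ∧ d ^ 2 ∣ n}).ncard : ℝ)
      ≤ ∑ d ∈ Ioc z N, ((N / d ^ 2 : ℕ) : ℝ) := mod_cast hcard
    _ ≤ ∑ d ∈ Ioc z N, ((d : ℝ) ^ 2)⁻¹ * N := by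
        gcongr with d
        exact Nat.cast_div_le.trans_eq (by push_cast; ring)
    _ = (∑ d ∈ Ioc z N, ((d : ℝ) ^ 2)⁻¹) * N := (sum_mul ..).symm
    _ ≤ (z : ℝ)⁻¹ * N + 0 := by rw [add_zero]; gcongr

lemma upperDensity_coprime_le {Q : ℕ} (hQ : Q ≠ 0) :
    upperDensity {n | Q.Coprime n} ≤ ENNReal.ofReal (Q.totient / Q) := by
  refine upperDensity_le_ofReal (C := Q.totient) fun N ↦ ?_
  have hcard : (Set.Icc 1 N ∩ {n | Q.Coprime n}).ncard ≤ Q.totient * (N / Q + 1) := by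
    convert Nat.Ico_filter_coprime_le 1 N hQ
    rw [← Set.ncard_coe_finset]
    congr 1
    ext n
    simp [Nat.lt_one_add_iff]
  calc ((Set.Icc 1 N ∩ {n | Q.Coprime n}).ncard : ℝ)
      ≤ Q.totient * ((N / Q : ℕ) + 1) := mod_cast hcard
    _ ≤ Q.totient * (N / Q + 1) := by gcongr; exact Nat.cast_div_le
    _ = Q.totient / Q * N + Q.totient := by ring

lemma totient_prod_div_le_exp {P : Finset ℕ} (hP : ∀ p ∈ P, p.Prime) :
    ((∏ p ∈ P, p).totient : ℝ) / (∏ p ∈ P, p : ℕ) ≤ Real.exp (-∑ p ∈ P, 1 / (p : ℝ)) := by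
  have hprod_ne : ((∏ p ∈ P, p : ℕ) : ℝ) ≠ 0 :=
    mod_cast prod_ne_zero_iff.mpr fun p hp ↦ (hP p hp).ne_zero
  have htot : ((∏ p ∈ P, p).totient : ℝ) = (∏ p ∈ P, p : ℕ) * ∏ p ∈ P, (1 - 1 / (p : ℝ)) := by
    have h := Nat.totient_eq_mul_prod_factors (∏ p ∈ P, p)
    rw [Nat.primeFactors_prod hP] at h
    simpa using congrArg (Rat.cast : ℚ → ℝ) h
  rw [htot, mul_div_cancel_left₀ _ hprod_ne, ← sum_neg_distrib, Real.exp_sum]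
  refine prod_le_prod (fun p hp ↦ sub_nonneg.mpr ?_) fun p _ ↦ Real.one_sub_le_exp_neg _
  exact div_le_one_of_le₀ (mod_cast (hP p hp).one_le) p.cast_nonneg

variable {A : Set ℕ}

lemma upperDensity_forall_not_dvd_eq_zero (hA : ∀ p ∈ A, p.Prime)
    (hdiv : ¬ Summable (A.indicator fun n : ℕ ↦ 1 / (n : ℝ))) :
    upperDensity {n | ∀ p ∈ A, ¬ p ∣ n} = 0 := by
  have hnonneg (n : ℕ) : 0 ≤ A.indicator (fun n : ℕ ↦ 1 / (n : ℝ)) n :=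
    Set.indicator_nonneg (fun _ _ ↦ by positivity) n
  rw [not_summable_iff_tendsto_nat_atTop_of_nonneg hnonneg] at hdiv
  have hlim : Tendsto (fun M ↦ ENNReal.ofReal
      (Real.exp (-∑ n ∈ range M, A.indicator (fun n : ℕ ↦ 1 / (n : ℝ)) n))) atTop (𝓝 0) :=
    ENNReal.ofReal_zero ▸
      ENNReal.tendsto_ofReal (Real.tendsto_exp_neg_atTop_nhds_zero.comp hdiv)
  refine nonpos_iff_eq_zero.mp <| ge_of_tendsto' hlim fun M ↦ ?_
  set P : Finset ℕ := {p ∈ range M | p ∈ A}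
  have hP : ∀ p ∈ P, p ∈ A := fun p hp ↦ (mem_filter.mp hp).2
  have hPprime : ∀ p ∈ P, p.Prime := fun p hp ↦ hA p (hP p hp)
  have hsub : {n | ∀ p ∈ A, ¬ p ∣ n} ⊆ {n | (∏ p ∈ P, p).Coprime n} := fun n hn ↦
    Nat.Coprime.prod_left fun p hp ↦
      (hPprime p hp).coprime_iff_not_dvd.mpr (hn p (hP p hp))
  have hsum : ∑ n ∈ range M, A.indicator (fun n : ℕ ↦ 1 / (n : ℝ)) n = ∑ p ∈ P, 1 / (p : ℝ) := by
    simp only [Set.indicator_apply, P, sum_filter]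
  calc upperDensity {n | ∀ p ∈ A, ¬ p ∣ n}
      ≤ upperDensity {n | (∏ p ∈ P, p).Coprime n} := upperDensity_mono hsub
    _ ≤ ENNReal.ofReal ((∏ p ∈ P, p).totient / (∏ p ∈ P, p : ℕ)) :=
        upperDensity_coprime_le (prod_ne_zero_iff.mpr fun p hp ↦ (hPprime p hp).ne_zero)
    _ ≤ ENNReal.ofReal (Real.exp (-∑ p ∈ P, 1 / (p : ℝ))) :=
        ENNReal.ofReal_le_ofReal (totient_prod_div_le_exp hPprime)
    _ = _ := by rw [hsum]

lemma upperDensity_forall_dvd_imp_sq_dvd_eq_zero (hA : ∀ p ∈ A, p.Prime)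
    (hdiv : ¬ Summable (A.indicator fun n : ℕ ↦ 1 / (n : ℝ))) :
    upperDensity {n | ∀ p ∈ A, p ∣ n → p ^ 2 ∣ n} = 0 := by
  refine upperDensity_eq_zero_of_forall_le_inv fun z hz ↦ ?_
  have hdiv_tail : ¬ Summable ((A ∩ Set.Ioi z).indicator fun n : ℕ ↦ 1 / (n : ℝ)) := by
    refine fun h ↦ hdiv ((summable_congr_cofinite ?_).mp h)
    rw [Nat.cofinite_eq_atTop]
    filter_upwards [eventually_gt_atTop z] with n hn
    simp [Set.indicator_apply, hn]
  have hsub : {n | ∀ p ∈ A, p ∣ n → p ^ 2 ∣ n} ⊆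
      {n | ∃ d, z < d ∧ d ^ 2 ∣ n} ∪ {n | ∀ p ∈ A ∩ Set.Ioi z, ¬ p ∣ n} := by
    intro n hn
    by_cases hdvd : ∃ p ∈ A ∩ Set.Ioi z, p ∣ n
    · obtain ⟨p, ⟨hpA, hzp⟩, hpn⟩ := hdvd
      exact .inl ⟨p, hzp, hn p hpA hpn⟩
    · exact .inr fun p hp hpn ↦ hdvd ⟨p, hp, hpn⟩
  calc upperDensity {n | ∀ p ∈ A, p ∣ n → p ^ 2 ∣ n}
      ≤ upperDensity {n | ∃ d, z < d ∧ d ^ 2 ∣ n} :=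
        (upperDensity_mono hsub).trans_eq <| upperDensity_union_eq_left <|
          upperDensity_forall_not_dvd_eq_zero (fun p hp ↦ hA p hp.1) hdiv_tail
    _ ≤ ENNReal.ofReal (z : ℝ)⁻¹ := upperDensity_exists_sq_dvd_le hz

end Sieve

section Dirichlet

variable {q : ℕ} {a : ZMod q}

lemma sub_one_mul_residueClass_div_rpow_le {x : ℝ} (hx : x ∈ Set.Ioc 1 2) (n : ℕ) :
    (x - 1) * (residueClass a n / (n : ℝ) ^ x) ≤
      {p : ℕ | p.Prime ∧ (p : ZMod q) = a}.indicator (fun n : ℕ ↦ 1 / (n : ℝ)) n +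
        (if n.Prime then 0 else residueClass a n) / n := by
  have hx0 : 0 < x - 1 := sub_pos.mpr hx.1
  have hres := residueClass_nonneg a n
  rcases n.eq_zero_or_pos with rfl | hn
  · simp [Set.indicator_apply]
  have hn0 : (0 : ℝ) < n := mod_cast hn
  by_cases hp : n.Prime
  · by_cases hna : (n : ZMod q) = a
    · have hlog : (x - 1) * Real.log n ≤ (n : ℝ) ^ (x - 1) :=
        (le_div_iff₀' hx0).mp (Real.log_le_rpow_div hn0.le hx0)
      have hres_eq : residueClass a n = Real.log n := by
        simp [residueClass, hna, vonMangoldt_apply_prime hp]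
      have hbound : (x - 1) * (Real.log n / (n : ℝ) ^ x) ≤ 1 / n := by
        rw [← mul_div_assoc, div_le_div_iff₀ (by positivity) hn0, one_mul]
        calc (x - 1) * Real.log n * n ≤ (n : ℝ) ^ (x - 1) * n := by gcongr
          _ = (n : ℝ) ^ x := by rw [← Real.rpow_add_one hn0.ne', sub_add_cancel]
      rw [hres_eq]
      simpa [hp, hna] using hbound
    · simp [residueClass, hna]
  · have hpow : (n : ℝ) ≤ (n : ℝ) ^ x := Real.self_le_rpow_of_one_le (mod_cast hn) hx.1.le
    calc (x - 1) * (residueClass a n / (n : ℝ) ^ x)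
        ≤ 1 * (residueClass a n / n) := by gcongr; linarith [hx.2]
      _ = _ := by simp [hp]

lemma tendsto_sub_one_nhdsGT : Tendsto (fun x : ℝ ↦ x - 1) (𝓝[>] 1) (𝓝 0) :=
  tendsto_sub_nhds_zero_iff.mpr (tendsto_id.mono_left nhdsWithin_le_nhds)

lemma tendsto_sub_one_mul_tsum_residueClass_of_summable
    (hsum : Summable ({p : ℕ | p.Prime ∧ (p : ZMod q) = a}.indicator fun n : ℕ ↦ 1 / (n : ℝ))) :
    Tendsto (fun x : ℝ ↦ (x - 1) * ∑' n : ℕ, residueClass a n / (n : ℝ) ^ x) (𝓝[>] 1) (𝓝 0) := by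
  have hpointwise (n : ℕ) :
      Tendsto (fun x : ℝ ↦ (x - 1) * (residueClass a n / (n : ℝ) ^ x)) (𝓝[>] 1) (𝓝 0) := by
    rcases n.eq_zero_or_pos with rfl | hn
    · simp
    have hcont : ContinuousAt (fun x : ℝ ↦ residueClass a n / (n : ℝ) ^ x) 1 :=
      continuousAt_const.div (Real.continuousAt_const_rpow (by positivity)) (by positivity)
    simpa using tendsto_sub_one_nhdsGT.mul (hcont.tendsto.mono_left nhdsWithin_le_nhds)
  simp only [← tsum_mul_left]
  rw [← tsum_zero (α := ℝ) (β := ℕ)]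
  refine tendsto_tsum_of_dominated_convergence
    (hsum.add (summable_residueClass_non_primes_div a)) hpointwise ?_
  filter_upwards [Ioc_mem_nhdsGT one_lt_two] with x hx n
  have hnonneg : 0 ≤ (x - 1) * (residueClass a n / (n : ℝ) ^ x) :=
    mul_nonneg (sub_nonneg.mpr hx.1.le) (div_nonneg (residueClass_nonneg a n) (by positivity))
  rw [Real.norm_of_nonneg hnonneg]
  exact sub_one_mul_residueClass_div_rpow_le hx n

-- The L-series of `Λ` restricted to `n ≡ a (mod q)` has a simple pole with residue `1 / φ(q)` at
-- `1`, so `x - 1` times it cannot tend to `0`.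
lemma not_summable_one_div_primes_residueClass [NeZero q] (ha : IsUnit a) :
    ¬ Summable ({p : ℕ | p.Prime ∧ (p : ZMod q) = a}.indicator fun n : ℕ ↦ 1 / (n : ℝ)) := by
  intro hsum
  obtain ⟨C, hC⟩ := LSeries_residueClass_lower_bound ha
  have hlower : Tendsto (fun x : ℝ ↦ (q.totient : ℝ)⁻¹ - C * (x - 1)) (𝓝[>] 1)
      (𝓝 (q.totient : ℝ)⁻¹) := by
    simpa using (tendsto_sub_one_nhdsGT.const_mul C).const_sub (q.totient : ℝ)⁻¹
  have hle : (q.totient : ℝ)⁻¹ ≤ 0 := by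
    refine le_of_tendsto_of_tendsto hlower
      (tendsto_sub_one_mul_tsum_residueClass_of_summable hsum) ?_
    filter_upwards [Ioc_mem_nhdsGT one_lt_two] with x hx
    have hx0 : 0 < x - 1 := sub_pos.mpr hx.1
    calc (q.totient : ℝ)⁻¹ - C * (x - 1) = (x - 1) * ((q.totient : ℝ)⁻¹ / (x - 1) - C) := by
          field_simp
      _ ≤ (x - 1) * ∑' n : ℕ, residueClass a n / (n : ℝ) ^ x := by gcongr; exact hC hx
  exact hle.not_gt (inv_pos.mpr (mod_cast Nat.totient_pos.mpr (Nat.pos_of_neZero q)))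

end Dirichlet

section Divisibility

variable {R : Type*} [MonoidWithZero R] {f : ArithmeticFunction R}

lemma map_prime_dvd_map_of_not_sq_dvd (hf : f.IsMultiplicative) {p n : ℕ} (hp : p.Prime)
    (hpn : p ∣ n) (hsq : ¬ p ^ 2 ∣ n) : f p ∣ f n := by
  obtain ⟨t, rfl⟩ := hpn
  have hcop : p.Coprime t := hp.coprime_iff_not_dvd.mpr fun hpt ↦
    hsq (sq p ▸ Nat.mul_dvd_mul_left p hpt)
  exact hf.map_mul_of_coprime hcop ▸ dvd_mul_right _ _

lemma upperDensity_not_dvd_map_eq_zero (hf : f.IsMultiplicative) {m : R}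
    (hdiv : ¬ Summable ({p : ℕ | p.Prime ∧ m ∣ f p}.indicator fun n : ℕ ↦ 1 / (n : ℝ))) :
    upperDensity {n | ¬ m ∣ f n} = 0 := by
  have hsub : {n | ¬ m ∣ f n} ⊆ {n | ∀ p ∈ {p : ℕ | p.Prime ∧ m ∣ f p}, p ∣ n → p ^ 2 ∣ n} := by
    rintro n hn p ⟨hp, hmp⟩ hpn
    by_contra hsq
    exact hn (hmp.trans (map_prime_dvd_map_of_not_sq_dvd hf hp hpn hsq))
  exact nonpos_iff_eq_zero.mp <| (upperDensity_mono hsub).trans_eq <|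
    upperDensity_forall_dvd_imp_sq_dvd_eq_zero (fun p hp ↦ hp.1) hdiv

lemma dvd_sigma_one_prime_iff {m p : ℕ} (hp : p.Prime) : m ∣ sigma 1 p ↔ (p : ZMod m) = -1 := by
  rw [sigma_one_apply, hp.sum_divisors, ← ZMod.natCast_eq_zero_iff, Nat.cast_add, Nat.cast_one,
    eq_neg_iff_add_eq_zero]

lemma upperDensity_not_dvd_sigma_one_eq_zero {m : ℕ} (hm : m ≠ 0) :
    upperDensity {n | ¬ m ∣ sigma 1 n} = 0 := by
  have : NeZero m := ⟨hm⟩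
  have hset : {p : ℕ | p.Prime ∧ m ∣ sigma 1 p} = {p : ℕ | p.Prime ∧ (p : ZMod m) = -1} :=
    Set.ext fun p ↦ and_congr_right dvd_sigma_one_prime_iff
  refine upperDensity_not_dvd_map_eq_zero isMultiplicative_sigma ?_
  rw [hset]
  exact not_summable_one_div_primes_residueClass isUnit_one.neg

lemma upperDensity_exists_pow_dvd_not_pow_dvd_sigma_one_eq_zero {k : ℕ} (hk : 2 ≤ k) :
    upperDensity {n | ∃ d ≠ 0, d ^ k ∣ n ∧ ¬ d ^ k ∣ sigma 1 n} = 0 := by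
  refine upperDensity_eq_zero_of_forall_le_inv fun z hz ↦ ?_
  have hsub : {n | ∃ d ≠ 0, d ^ k ∣ n ∧ ¬ d ^ k ∣ sigma 1 n} ⊆
      {n | ∃ d, z < d ∧ d ^ 2 ∣ n} ∪ ⋃ d ∈ Icc 1 z, {n | ¬ d ^ k ∣ sigma 1 n} := by
    rintro n ⟨d, hd, hdn, hdσ⟩
    rcases lt_or_ge z d with hzd | hdz
    · exact .inl ⟨d, hzd, (pow_dvd_pow d hk).trans hdn⟩
    · exact .inr (Set.mem_biUnion (mem_Icc.mpr ⟨Nat.pos_of_ne_zero hd, hdz⟩) hdσ)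
  have hsmall : upperDensity (⋃ d ∈ Icc 1 z, {n | ¬ d ^ k ∣ sigma 1 n}) = 0 :=
    upperDensity_biUnion_eq_zero fun d hd ↦ upperDensity_not_dvd_sigma_one_eq_zero <|
      pow_ne_zero k <| Nat.one_le_iff_ne_zero.mp (mem_Icc.mp hd).1
  calc upperDensity {n | ∃ d ≠ 0, d ^ k ∣ n ∧ ¬ d ^ k ∣ sigma 1 n}
      ≤ upperDensity {n | ∃ d, z < d ∧ d ^ 2 ∣ n} :=
        (upperDensity_mono hsub).trans_eq (upperDensity_union_eq_left hsmall)
    _ ≤ ENNReal.ofReal (z : ℝ)⁻¹ := upperDensity_exists_sq_dvd_le hz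

end Divisibility

theorem not_kfree_to_not_kfree_s (k : ℕ) (hk : 2 ≤ k) :
    (fun x : ℝ => (((Finset.Icc 1 ⌊x⌋₊).filter
        (fun n => ¬ KFree k n ∧ KFree k (s n))).card : ℝ))
      =o[atTop] (fun x : ℝ => x) := by
  have hsub : {n | ¬ KFree k n ∧ KFree k (s n)} ⊆
      {n | ∃ d ≠ 0, d ^ k ∣ n ∧ ¬ d ^ k ∣ sigma 1 n} := by
    rintro n ⟨hn, hsn⟩
    obtain ⟨p, hp, hpn⟩ : ∃ p : ℕ, p.Prime ∧ p ^ k ∣ n := by simpa [KFree] using hn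
    exact ⟨p, hp.ne_zero, hpn, fun hpσ ↦ hsn p hp (Nat.dvd_sub hpσ hpn)⟩
  have hzero : upperDensity {n | ¬ KFree k n ∧ KFree k (s n)} = 0 :=
    nonpos_iff_eq_zero.mp <| (upperDensity_mono hsub).trans_eq <|
      upperDensity_exists_pow_dvd_not_pow_dvd_sigma_one_eq_zero hk
  refine (isLittleO_ncard_of_upperDensity_eq_zero hzero).congr_left fun x ↦ ?_
  rw [← Set.ncard_coe_finset]
  congr 2
  ext n
  simp
end

section
/- Fix an integer k ≥ 2. Then as x → ∞, the number of integers n with 1 ≤ n ≤ x such that n is k-free and yet there exists a prime p with p^k ≤ (log log x)^{0.9} and p^k ∣ s(n) is o(x). (That is, almost always, if n is k-free then s(n) is not divisible by p^k for any prime p with p^k ≤ (log log x)^{0.9}.) -/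
open scoped Classical
open Filter Finset

/-!
If a prime `q ≡ -1 (mod m)` exactly divides `n`, then `m ∣ q + 1 ∣ σ(n)`; hence `k` such primes
force `m ^ k ∣ σ(n)`, and for `k`-free `n` the prime power `p ^ k` cannot divide both `σ(n)` and
`s(n) = σ(n) - n`. So it suffices that almost every `n ≤ x` has at least `k` exact prime divisors in
the class `-1` for every modulus `m` with `m ^ 2 ≤ (log log x) ^ θ`, where `θ < 1`. By Turán's
second-moment method this follows from `∑ 1 / q ≫ (log log x) / m`, the sum running over the primes
`q ≤ x` in the class, as few `n` have many divisors `q ^ 2`.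

The lower bound for `∑ 1 / q` has to be uniform in `m`. By orthogonality of characters it reduces to
`|log |L(u, χ)|| = O(m log m)` for `χ ≠ 1` and real `u` close to `1`. As `(-1) ^ 2 = 1`, `χ(-1)`
is real and the argument of `L(u, χ)` plays no role. If `χ ^ 2 ≠ 1`, the bound comes from the
3-4-1 inequality at real points; if `χ ^ 2 = 1`, from Monsky's Lambert-series proof that
`L(1, χ) ≠ 0`, made quantitative. Rankin's trick passes from `∑ q ^ (-u)` to `∑ 1 / q`.
-/

section SummationByParts

variable {E : Type*} [NormedAddCommGroup E] [NormedSpace ℝ E] {f : ℕ → ℝ} {g : ℕ → E} {B : ℝ}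

theorem norm_sum_range_smul_le_of_antitone (hf : Antitone f) (hf0 : ∀ n, 0 ≤ f n)
    (hg : ∀ n, ‖∑ i ∈ range n, g i‖ ≤ B) (n : ℕ) :
    ‖∑ i ∈ range n, f i • g i‖ ≤ B * f 0 := by
  have hlast : ‖f (n - 1) • ∑ i ∈ range n, g i‖ ≤ f (n - 1) * B := by
    rw [norm_smul, Real.norm_of_nonneg (hf0 _)]
    exact mul_le_mul_of_nonneg_left (hg _) (hf0 _)
  have hdiff : ‖∑ i ∈ range (n - 1), (f (i + 1) - f i) • ∑ j ∈ range (i + 1), g j‖ ≤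
      (f 0 - f (n - 1)) * B := by
    rw [← sum_range_sub', sum_mul]
    refine norm_sum_le_of_le _ fun i _ => ?_
    rw [norm_smul, norm_sub_rev, Real.norm_of_nonneg (sub_nonneg.2 (hf i.le_succ))]
    exact mul_le_mul_of_nonneg_left (hg _) (sub_nonneg.2 (hf i.le_succ))
  calc ‖∑ i ∈ range n, f i • g i‖
      ≤ f (n - 1) * B + (f 0 - f (n - 1)) * B := by
        rw [sum_range_by_parts]
        exact norm_sub_le_of_le hlast hdiff
    _ = B * f 0 := by ring

theorem norm_le_of_hasSum_smul_of_antitone {a : E} (hf : Antitone f) (hf0 : ∀ n, 0 ≤ f n)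
    (hg : ∀ n, ‖∑ i ∈ range n, g i‖ ≤ B) (h : HasSum (fun i => f i • g i) a) :
    ‖a‖ ≤ B * f 0 :=
  le_of_tendsto h.tendsto_sum_nat.norm
    (Eventually.of_forall (norm_sum_range_smul_le_of_antitone hf hf0 hg))

end SummationByParts

section LambertSeries

variable {h : ℕ →*₀ ℝ} {t : ℝ}

theorem sum_divisors_nonneg (hh : ∀ n, -1 ≤ h n) (n : ℕ) : 0 ≤ ∑ d ∈ n.divisors, h d := by
  let H : ArithmeticFunction ℝ := ⟨h, map_zero h⟩
  have hH : (ArithmeticFunction.zeta * H).IsMultiplicative :=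
    ArithmeticFunction.isMultiplicative_zeta.natCast.mul
      ⟨map_one h, fun {m n} _ => map_mul h m n⟩
  have hsum (n : ℕ) : (ArithmeticFunction.zeta * H) n = ∑ d ∈ n.divisors, h d :=
    ArithmeticFunction.coe_zeta_mul_apply
  rcases eq_or_ne n 0 with rfl | hn
  · simp
  rw [← hsum, hH.multiplicative_factorization _ hn]
  refine Finset.prod_nonneg fun p hp => ?_
  simp only [hsum, Nat.sum_divisors_prime_pow (Nat.prime_of_mem_primeFactors hp), map_pow]
  rcases (hh p).eq_or_lt with hp1 | hp1
  · rw [← hp1, neg_one_geom_sum]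
    split_ifs <;> norm_num
  · exact (geom_sum_pos' (by linarith) (Nat.succ_ne_zero _)).le

theorem sum_divisors_prime_pow_eq_one {q : ℕ} (hq : q.Prime) (hhq : h q = 0) (j : ℕ) :
    ∑ d ∈ (q ^ j).divisors, h d = 1 := by
  rw [Nat.sum_divisors_prime_pow hq, Finset.sum_range_succ']
  simp [hhq]

theorem hasSum_lambert (hh : ∀ n, |h n| ≤ 1) (ht0 : 0 < t) (ht1 : t < 1) :
    HasSum (fun n : ℕ+ => (∑ d ∈ (n : ℕ).divisors, h d) * t ^ (n : ℕ))
      (∑' i : ℕ, h (i + 1) * (t ^ (i + 1) / (1 - t ^ (i + 1)))) := by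
  have htn : ‖t‖ < 1 := by rwa [Real.norm_of_nonneg ht0.le]
  let F : ℕ+ × ℕ+ → ℝ := fun c => h c.1 * t ^ (c.1 * c.2 : ℕ)
  have hF : Summable F := by
    refine Summable.of_norm_bounded (summable_prod_mul_pow 0 htn).norm fun c => ?_
    simp only [F, norm_mul, pow_zero, one_mul]
    exact mul_le_of_le_one_left (norm_nonneg _) (hh _)
  have hgeom (d : ℕ+) : ∑' m : ℕ+, t ^ (d * m : ℕ) = t ^ (d : ℕ) / (1 - t ^ (d : ℕ)) := by
    rw [tsum_pnat_eq_tsum_succ (f := fun m : ℕ => t ^ ((d : ℕ) * m))]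
    simp only [pow_mul, pow_succ]
    rw [tsum_mul_right, tsum_geometric_of_lt_one (by positivity) (pow_lt_one₀ ht0.le ht1 d.ne_zero)]
    ring
  have htsum : ∑' c, F c = ∑' i : ℕ, h (i + 1) * (t ^ (i + 1) / (1 - t ^ (i + 1))) := by
    rw [hF.tsum_prod, ← tsum_pnat_eq_tsum_succ (f := fun i : ℕ => h i * (t ^ i / (1 - t ^ i)))]
    simp only [F, tsum_mul_left, hgeom]
  rw [← htsum]
  refine (sigmaAntidiagonalEquivProd.hasSum_iff.2 hF.hasSum).sigma fun n => ?_
  convert hasSum_fintype fun x : (n : ℕ).divisorsAntidiagonal =>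
    (F ∘ sigmaAntidiagonalEquivProd) ⟨n, x⟩ using 1
  rw [← Nat.sum_divisorsAntidiagonal (fun d _ => h d), Finset.sum_mul, ← Finset.sum_attach]
  refine Finset.sum_congr rfl fun x _ => ?_
  simp only [F, Function.comp, sigmaAntidiagonalEquivProd, divisorsAntidiagonalFactors,
    Equiv.coe_fn_mk, PNat.mk_coe, (Nat.mem_divisorsAntidiagonal.1 x.2).1]

theorem sum_pow_prime_pow_le_lambert (hh : ∀ n, |h n| ≤ 1) {q : ℕ} (hq : q.Prime) (hhq : h q = 0)
    (ht0 : 0 < t) (ht1 : t < 1) (J : ℕ) :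
    ∑ j ∈ range J, t ^ q ^ j ≤ ∑' i : ℕ, h (i + 1) * (t ^ (i + 1) / (1 - t ^ (i + 1))) := by
  let e : ℕ ↪ ℕ+ := ⟨fun j => ⟨q ^ j, pow_pos hq.pos j⟩,
    fun _ _ hab => Nat.pow_right_injective hq.two_le (congrArg PNat.val hab)⟩
  have hnonneg (n : ℕ+) : 0 ≤ (∑ d ∈ (n : ℕ).divisors, h d) * t ^ (n : ℕ) :=
    mul_nonneg (sum_divisors_nonneg (fun m => (abs_le.1 (hh m)).1) n) (by positivity)
  refine le_trans (le_of_eq ?_)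
    (sum_le_hasSum ((range J).map e) (fun n _ => hnonneg n) (hasSum_lambert hh ht0 ht1))
  rw [sum_map]
  exact sum_congr rfl fun j _ =>
    ((congrArg (· * t ^ q ^ j) (sum_divisors_prime_pow_eq_one hq hhq j)).trans (one_mul _)).symm

end LambertSeries

section MonskyWeight

variable {t : ℝ}

/-- Monsky's weights `1 / (n (1 - t)) - t ^ n / (1 - t ^ n)`: weighted by `h n`, their sum is the
difference between `(1 - t)⁻¹ ∑ h n / n` and the Lambert series of `h` at `t`. -/
noncomputable def monskyWeight (t : ℝ) (n : ℕ) : ℝ :=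
  1 / (n * (1 - t)) - t ^ n / (1 - t ^ n)

theorem monskyWeight_one (ht : t < 1) : monskyWeight t 1 = 1 := by
  have : 1 - t ≠ 0 := sub_ne_zero.2 ht.ne'
  simp only [monskyWeight, Nat.cast_one, one_mul, pow_one]
  field_simp

theorem monskyWeight_eq_geom_sum (t : ℝ) (n : ℕ) :
    monskyWeight t n = (1 / n - t ^ n / ∑ j ∈ range n, t ^ j) / (1 - t) := by
  rw [monskyWeight, ← mul_neg_geom_sum t n, sub_div, div_div, div_div,
    mul_comm (∑ j ∈ range n, t ^ j)]

theorem sq_mul_pow_pred_le_geom_sum_sq (ht : 0 ≤ t) (n : ℕ) :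
    (n : ℝ) ^ 2 * t ^ (n - 1) ≤ (∑ j ∈ range n, t ^ j) ^ 2 := by
  have hcs := Finset.sum_sq_le_sum_mul_sum_of_sq_le_mul (range n) (r := fun _ => √(t ^ (n - 1)))
    (f := fun j => t ^ j) (g := fun j => t ^ (n - 1 - j)) (fun j _ => by positivity)
    (fun j _ => by positivity) fun j hj => by
      rw [Real.sq_sqrt (by positivity), ← pow_add]
      exact (congrArg (t ^ ·) (by have := mem_range.1 hj; omega)).le
  rwa [sum_const, card_range, nsmul_eq_mul, mul_pow, Real.sq_sqrt (by positivity),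
    sum_range_reflect (fun j => t ^ j) n, ← sq] at hcs

theorem mul_succ_mul_pow_le_geom_sum_mul (ht0 : 0 ≤ t) (ht1 : t ≤ 1) (n : ℕ) :
    n * (n + 1 : ℕ) * t ^ n ≤ (∑ j ∈ range n, t ^ j) * ∑ j ∈ range (n + 1), t ^ j := by
  refine le_of_sq_le_sq ?_ (by positivity)
  calc (n * (n + 1 : ℕ) * t ^ n) ^ 2 = (n : ℝ) ^ 2 * ((n + 1 : ℕ) : ℝ) ^ 2 * t ^ (n + n) := by ring
    _ ≤ (n : ℝ) ^ 2 * ((n + 1 : ℕ) : ℝ) ^ 2 * t ^ (n - 1 + n) := by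
        gcongr ?_ * ?_
        exact pow_le_pow_of_le_one ht0 ht1 (by omega)
    _ = (n : ℝ) ^ 2 * t ^ (n - 1) * (((n + 1 : ℕ) : ℝ) ^ 2 * t ^ (n + 1 - 1)) := by
        rw [pow_add, Nat.add_sub_cancel]
        ring
    _ ≤ ((∑ j ∈ range n, t ^ j) * ∑ j ∈ range (n + 1), t ^ j) ^ 2 := by
        rw [mul_pow]
        gcongr <;> exact sq_mul_pow_pred_le_geom_sum_sq ht0 _

theorem antitone_monskyWeight_succ (ht0 : 0 < t) (ht1 : t < 1) :
    Antitone fun i => monskyWeight t (i + 1) := by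
  refine antitone_nat_of_succ_le fun i => ?_
  rw [monskyWeight_eq_geom_sum, monskyWeight_eq_geom_sum]
  refine div_le_div_of_nonneg_right ?_ (by linarith)
  have hmul := mul_succ_mul_pow_le_geom_sum_mul ht0.le ht1.le (i + 1)
  have hG : 0 < ∑ j ∈ range (i + 1), t ^ j := sum_pos (fun j _ => by positivity) (by simp)
  have hG' : 0 < ∑ j ∈ range (i + 1 + 1), t ^ j := sum_pos (fun j _ => by positivity) (by simp)
  have hsucc : ∑ j ∈ range (i + 1 + 1), t ^ j = t * ∑ j ∈ range (i + 1), t ^ j + 1 := geom_sum_succ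
  suffices t ^ (i + 1) / (∑ j ∈ range (i + 1), t ^ j) -
      t ^ (i + 1 + 1) / ∑ j ∈ range (i + 1 + 1), t ^ j ≤
      1 / (i + 1 : ℕ) - 1 / (i + 1 + 1 : ℕ) by linarith
  calc t ^ (i + 1) / (∑ j ∈ range (i + 1), t ^ j) -
        t ^ (i + 1 + 1) / ∑ j ∈ range (i + 1 + 1), t ^ j
      = t ^ (i + 1) / ((∑ j ∈ range (i + 1), t ^ j) * ∑ j ∈ range (i + 1 + 1), t ^ j) := by
        rw [div_sub_div _ _ hG.ne' hG'.ne', hsucc]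
        ring
    _ ≤ 1 / ((i + 1 : ℕ) * (i + 1 + 1 : ℕ)) := by
        rw [div_le_div_iff₀ (by positivity) (by positivity)]
        linarith
    _ = 1 / (i + 1 : ℕ) - 1 / (i + 1 + 1 : ℕ) := by
        push_cast
        field_simp
        ring

theorem monskyWeight_nonneg (ht0 : 0 < t) (ht1 : t < 1) {n : ℕ} (hn : n ≠ 0) :
    0 ≤ monskyWeight t n := by
  rw [monskyWeight_eq_geom_sum]
  have hG : 0 < ∑ j ∈ range n, t ^ j := sum_pos (fun j _ => by positivity) (by simpa)
  have hle : n * t ^ n ≤ ∑ j ∈ range n, t ^ j := by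
    have := card_nsmul_le_sum (range n) (fun j => t ^ j) (t ^ n) fun j hj =>
      pow_le_pow_of_le_one ht0.le ht1.le (mem_range.1 hj).le
    rwa [card_range, nsmul_eq_mul] at this
  refine div_nonneg (sub_nonneg.2 ?_) (by linarith)
  rw [div_le_div_iff₀ hG (by positivity)]
  linarith

end MonskyWeight

theorem summable_mul_lambert {a : ℕ → ℝ} {t : ℝ} (ha : ∀ n, |a n| ≤ 1) (ht0 : 0 < t) (ht1 : t < 1) :
    Summable fun i : ℕ => a (i + 1) * (t ^ (i + 1) / (1 - t ^ (i + 1))) := by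
  refine Summable.of_norm_bounded
    ((summable_geometric_of_lt_one ht0.le ht1).div_const (1 - t)) fun i => ?_
  have hle : t ^ (i + 1) ≤ t := pow_le_of_le_one ht0.le ht1.le i.succ_ne_zero
  rw [norm_mul, Real.norm_of_nonneg (div_nonneg (by positivity) (by linarith))]
  refine (mul_le_of_le_one_left (div_nonneg (by positivity) (by linarith)) (ha _)).trans ?_
  exact div_le_div₀ (by positivity) (pow_le_pow_of_le_one ht0.le ht1.le i.le_succ) (by linarith)
    (by linarith)

theorem sum_pow_prime_pow_sub_le {h : ℕ →*₀ ℝ} {B S t : ℝ} (hh : ∀ n, |h n| ≤ 1)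
    (hB : ∀ n, |∑ i ∈ range n, h (i + 1)| ≤ B)
    (hS : HasSum (fun i : ℕ => h (i + 1) / (i + 1 : ℕ)) S) {q : ℕ} (hq : q.Prime)
    (hhq : h q = 0) (ht0 : 0 < t) (ht1 : t < 1) (J : ℕ) :
    ∑ j ∈ range J, t ^ q ^ j - B ≤ S / (1 - t) := by
  have hsum : HasSum (fun i : ℕ => monskyWeight t (i + 1) • h (i + 1))
      (S / (1 - t) - ∑' i : ℕ, h (i + 1) * (t ^ (i + 1) / (1 - t ^ (i + 1)))) := by
    refine ((hS.div_const (1 - t)).sub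
      (summable_mul_lambert hh ht0 ht1).hasSum).congr_fun fun i => ?_
    simp only [monskyWeight, smul_eq_mul, one_div, mul_inv]
    ring
  have hle := norm_le_of_hasSum_smul_of_antitone (antitone_monskyWeight_succ ht0 ht1)
    (fun n => monskyWeight_nonneg ht0 ht1 n.succ_ne_zero) hB hsum
  rw [zero_add, monskyWeight_one ht1, mul_one] at hle
  linarith [(abs_le.1 hle).1, sum_pow_prime_pow_le_lambert hh hq hhq ht0 ht1 J]

section CharacterSums

variable {N : ℕ} [NeZero N] {χ : DirichletCharacter ℂ N}

theorem sum_range_dirichletCharacter_add_eq_zero (hχ : χ ≠ 1) (a : ZMod N) :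
    ∑ i ∈ range N, χ (i + a) = 0 := by
  rw [← MulChar.sum_eq_zero_of_ne_one hχ, ← Equiv.sum_comp (Equiv.addRight a)]
  refine sum_nbij' (fun i => (i : ZMod N)) ZMod.val (by simp) (by simp [ZMod.val_lt])
    (fun _ hi => ZMod.val_cast_of_lt (mem_range.1 hi)) (by simp) (by simp)

theorem norm_sum_range_dirichletCharacter_add_le (hχ : χ ≠ 1) (a : ZMod N) (n : ℕ) :
    ‖∑ i ∈ range n, χ (i + a)‖ ≤ N := by
  induction n using Nat.strong_induction_on generalizing a with
  | _ n ih =>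
    rcases lt_or_ge n N with h | h
    · calc ‖∑ i ∈ range n, χ (i + a)‖ ≤ ∑ _i ∈ range n, (1 : ℝ) :=
            norm_sum_le_of_le _ fun _ _ => χ.norm_le_one _
        _ = n := by simp
        _ ≤ N := by exact_mod_cast h.le
    · obtain ⟨m, rfl⟩ := Nat.exists_eq_add_of_le h
      rw [sum_range_add, sum_range_dirichletCharacter_add_eq_zero hχ, zero_add]
      simpa using ih m (by have := NeZero.pos N; omega) a

end CharacterSums

section RealLSeries

open scoped LSeries.notation

open LSeries

theorem hasSum_smul_LSeries {f : ℕ → ℂ} {u : ℝ} (hf : LSeriesSummable f u) :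
    HasSum (fun i : ℕ => ((i + 1 : ℕ) : ℝ) ^ (-u) • f (i + 1)) (LSeries f u) := by
  have h := (hasSum_nat_add_iff' 1).2 hf.hasSum
  simp only [range_one, sum_singleton, term_zero, sub_zero] at h
  refine h.congr_fun fun i => ?_
  rw [term_of_ne_zero i.succ_ne_zero, Complex.real_smul, Complex.ofReal_cpow (by positivity),
    div_eq_mul_inv, mul_comm, ← Complex.cpow_neg]
  push_cast
  rfl

variable {N : ℕ} [NeZero N] {χ : DirichletCharacter ℂ N} {u v : ℝ}

theorem antitone_succ_rpow_neg (hu : 0 ≤ u) : Antitone fun i : ℕ => ((i + 1 : ℕ) : ℝ) ^ (-u) :=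
  fun _ _ hij => Real.rpow_le_rpow_of_nonpos (by positivity)
    (by exact_mod_cast Nat.succ_le_succ hij) (neg_nonpos.2 hu)

theorem norm_LSeries_le (hχ : χ ≠ 1) (hu : 1 < u) : ‖L ↗χ u‖ ≤ N := by
  have hsum := hasSum_smul_LSeries (χ.LSeriesSummable_of_one_lt_re (s := u) (by simpa))
  refine (norm_le_of_hasSum_smul_of_antitone (B := N) (antitone_succ_rpow_neg (by linarith))
    (fun _ => by positivity) (fun n => ?_) hsum).trans (by simp)
  simpa using norm_sum_range_dirichletCharacter_add_le hχ 1 n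

theorem antitone_log_mul_rpow_neg (hu : 1 ≤ u) :
    Antitone fun i : ℕ => Real.log (i + 2 + 1 : ℕ) * ((i + 2 + 1 : ℕ) : ℝ) ^ (-u) := by
  intro i j hij
  have hexp (n : ℕ) : Real.exp u⁻¹ ≤ (n + 2 + 1 : ℕ) := by
    calc Real.exp u⁻¹ ≤ Real.exp 1 := Real.exp_le_exp.2 (inv_le_one_of_one_le₀ hu)
      _ ≤ 3 := Real.exp_one_lt_three.le
      _ ≤ (n + 2 + 1 : ℕ) := by exact_mod_cast Nat.le_add_left 3 n
  have hle := Real.log_div_self_rpow_antitoneOn (show 0 < u by linarith) (hexp i) (hexp j)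
    (Nat.cast_le.2 (by omega))
  simpa only [Real.rpow_neg (Nat.cast_nonneg _), div_eq_mul_inv] using hle

theorem log_mul_rpow_neg_le_one {x : ℝ} (hu : 1 ≤ u) (hx : 1 ≤ x) : Real.log x * x ^ (-u) ≤ 1 := by
  have hx0 : 0 < x := by linarith
  calc Real.log x * x ^ (-u) ≤ x * x ^ (-1 : ℝ) := by
        gcongr
        · exact Real.log_le_self hx0.le
    _ = 1 := by rw [Real.rpow_neg_one, mul_inv_cancel₀ hx0.ne']

theorem norm_LSeries_logMul_le (hχ : χ ≠ 1) (hu : 1 < u) : ‖L (logMul ↗χ) u‖ ≤ 2 * N := by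
  have hN : (1 : ℝ) ≤ N := by exact_mod_cast NeZero.one_le
  have hone (i : ℕ) : Real.log (i + 1 : ℕ) * ((i + 1 : ℕ) : ℝ) ^ (-u) ≤ 1 :=
    log_mul_rpow_neg_le_one hu.le (by exact_mod_cast NeZero.one_le)
  have hnonneg (i : ℕ) : 0 ≤ Real.log (i + 1 : ℕ) * ((i + 1 : ℕ) : ℝ) ^ (-u) :=
    mul_nonneg (Real.log_natCast_nonneg _) (by positivity)
  have hsum : HasSum (fun i : ℕ => (Real.log (i + 1 : ℕ) * ((i + 1 : ℕ) : ℝ) ^ (-u)) •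
      χ (i + 1 : ℕ)) (L (logMul ↗χ) u) := by
    refine (hasSum_smul_LSeries (f := logMul ↗χ) (u := u) (LSeriesSummable_logMul_of_lt_re
      (by simpa [DirichletCharacter.absicssaOfAbsConv_eq_one (NeZero.ne N)] using
        by exact_mod_cast hu))).congr_fun fun i => ?_
    simp only [logMul, Complex.real_smul, ← Complex.natCast_log]
    push_cast
    ring
  have htail := norm_le_of_hasSum_smul_of_antitone (B := N) (antitone_log_mul_rpow_neg hu.le)
    (fun i => hnonneg (i + 2)) (fun n => ?_) ((hasSum_nat_add_iff' 2).2 hsum)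
  · have hhead : ‖(Real.log (1 + 1 : ℕ) * ((1 + 1 : ℕ) : ℝ) ^ (-u)) • χ (1 + 1 : ℕ)‖ ≤ 1 := by
      rw [norm_smul, Real.norm_of_nonneg (hnonneg 1)]
      exact mul_le_one₀ (hone 1) (norm_nonneg _) (χ.norm_le_one _)
    rw [sum_range_succ, sum_range_one] at htail
    simp only [zero_add, Nat.cast_one, Real.log_one, zero_mul, zero_smul] at htail
    have hN' := mul_le_of_le_one_right N.cast_nonneg (hone 2)
    linarith [norm_le_norm_sub_add (L (logMul ↗χ) u)
      ((Real.log (1 + 1 : ℕ) * ((1 + 1 : ℕ) : ℝ) ^ (-u)) • χ (1 + 1 : ℕ))]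
  · simpa only [add_assoc, Nat.cast_add] using
      norm_sum_range_dirichletCharacter_add_le hχ (2 + 1 : ℕ) n

theorem norm_LSeries_sub_le (hχ : χ ≠ 1) (hu : 1 < u) (hv : 1 < v) :
    ‖L ↗χ u - L ↗χ v‖ ≤ 2 * N * |u - v| := by
  refine (convex_Ioi 1).norm_image_sub_le_of_norm_hasDerivWithin_le (f := fun t : ℝ => L ↗χ t)
    (f' := fun t => -L (logMul ↗χ) t) (fun t ht => ?_) (fun t ht => ?_) hv hu
  · refine (LSeries_hasDerivAt ?_).comp_ofReal.hasDerivWithinAt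
    rw [DirichletCharacter.absicssaOfAbsConv_eq_one (NeZero.ne N)]
    exact_mod_cast ht
  · rw [norm_neg]
    exact norm_LSeries_logMul_le hχ ht

end RealLSeries

section ZetaBounds

variable {u : ℝ}

theorem rpow_neg_ge_tangent {v x y : ℝ} (hv : 0 ≤ v) (hx : 0 < x) (hy : 0 < y) :
    y ^ (-v) - v * (x - y) * y ^ (-(v + 1)) ≤ x ^ (-v) := by
  have hratio : 1 - v * (x - y) / y ≤ (x / y) ^ (-v) := by
    have hlog : v * Real.log (x / y) ≤ v * (x / y - 1) := by
      gcongr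
      exact Real.log_le_sub_one_of_pos (by positivity)
    have heq : v * (x / y - 1) = v * (x - y) / y := by field_simp
    rw [Real.rpow_def_of_pos (by positivity)]
    linarith [Real.add_one_le_exp (Real.log (x / y) * -v)]
  calc y ^ (-v) - v * (x - y) * y ^ (-(v + 1)) = y ^ (-v) * (1 - v * (x - y) / y) := by
        rw [neg_add, ← sub_eq_add_neg, Real.rpow_sub_one hy.ne']
        ring
    _ ≤ y ^ (-v) * (x / y) ^ (-v) := by gcongr
    _ = x ^ (-v) := by rw [← Real.mul_rpow hy.le (by positivity), mul_div_cancel₀ _ hy.ne']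

theorem hasSum_succ_rpow_neg_sub {v : ℝ} (hv : 0 < v) :
    HasSum (fun i : ℕ => ((i + 1 : ℕ) : ℝ) ^ (-v) - ((i + 1 + 1 : ℕ) : ℝ) ^ (-v)) 1 := by
  rw [hasSum_iff_tendsto_nat_of_nonneg fun i =>
    sub_nonneg.2 (antitone_succ_rpow_neg hv.le i.le_succ)]
  simp only [sum_range_sub' fun i : ℕ => ((i + 1 : ℕ) : ℝ) ^ (-v)]
  simpa using tendsto_const_nhds.sub (((tendsto_rpow_neg_atTop hv).comp
    tendsto_natCast_atTop_atTop).comp (tendsto_add_atTop_nat 1))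

theorem summable_succ_rpow_neg (hu : 1 < u) : Summable fun i : ℕ => ((i + 1 : ℕ) : ℝ) ^ (-u) :=
  (summable_nat_add_iff 1).2 (Real.summable_nat_rpow.2 (by linarith))

theorem inv_sub_one_le_tsum_rpow_neg (hu : 1 < u) :
    (u - 1)⁻¹ ≤ ∑' i : ℕ, ((i + 1 : ℕ) : ℝ) ^ (-u) := by
  have hu0 : 0 < u - 1 := by linarith
  rw [inv_le_iff_one_le_mul₀ hu0, mul_comm]
  refine hasSum_le (fun i => ?_) (hasSum_succ_rpow_neg_sub hu0)
    ((summable_succ_rpow_neg hu).hasSum.mul_left _)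
  have h := rpow_neg_ge_tangent hu0.le (x := (i + 1 + 1 : ℕ)) (y := (i + 1 : ℕ))
    (by positivity) (by positivity)
  rw [Nat.cast_succ (i + 1), add_sub_cancel_left, mul_one, sub_add_cancel] at h
  push_cast at h ⊢
  linarith

theorem tsum_rpow_neg_le_one_add_inv (hu : 1 < u) :
    ∑' i : ℕ, ((i + 1 : ℕ) : ℝ) ^ (-u) ≤ 1 + (u - 1)⁻¹ := by
  have hu0 : 0 < u - 1 := by linarith
  rw [(summable_succ_rpow_neg hu).tsum_eq_zero_add, zero_add, Nat.cast_one, Real.one_rpow,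
    add_le_add_iff_left, ← mul_one (u - 1)⁻¹, ← div_eq_inv_mul, le_div_iff₀' hu0]
  refine hasSum_le (fun i => ?_)
    (((summable_nat_add_iff 1).2 (summable_succ_rpow_neg hu)).hasSum.mul_left _)
    (hasSum_succ_rpow_neg_sub hu0)
  have h := rpow_neg_ge_tangent hu0.le (x := (i + 1 : ℕ)) (y := (i + 1 + 1 : ℕ))
    (by positivity) (by positivity)
  rw [Nat.cast_succ (i + 1), sub_add_cancel_left, sub_add_cancel] at h
  push_cast at h ⊢
  linarith

end ZetaBounds

section LowerBounds

open scoped LSeries.notation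

variable {N : ℕ} {χ : DirichletCharacter ℂ N} {u : ℝ}

theorem norm_LSeries_le_tsum_rpow_neg (χ : DirichletCharacter ℂ N) (hu : 1 < u) :
    ‖L ↗χ u‖ ≤ ∑' i : ℕ, ((i + 1 : ℕ) : ℝ) ^ (-u) := by
  rw [← (hasSum_smul_LSeries (χ.LSeriesSummable_of_one_lt_re (s := u) (by simpa))).tsum_eq]
  refine tsum_of_norm_bounded (summable_succ_rpow_neg hu).hasSum fun i => ?_
  rw [norm_smul, Real.norm_of_nonneg (by positivity)]
  exact mul_le_of_le_one_right (by positivity) (χ.norm_le_one _)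

theorem one_le_norm_LSeries_pow_mul [NeZero N] (χ : DirichletCharacter ℂ N) (hu : 1 < u) :
    1 ≤ ‖L ↗(1 : DirichletCharacter ℂ N) u‖ ^ 3 * ‖L ↗χ u‖ ^ 4 * ‖L ↗(χ ^ 2 :) u‖ := by
  have h := χ.norm_LSeries_product_ge_one (sub_pos.2 hu) 0
  have hcast : (1 : ℂ) + ((u - 1 : ℝ) : ℂ) = u := by push_cast; ring
  simpa only [Complex.ofReal_zero, mul_zero, add_zero, hcast, norm_mul, norm_pow] using h

theorem inv_le_norm_LSeries_of_sq_ne_one [NeZero N] (hχ : χ ^ 2 ≠ 1) (hu : 1 < u)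
    (hu' : u ≤ 1 + (2048 * (N : ℝ) ^ 5)⁻¹) : (2048 * (N : ℝ) ^ 5)⁻¹ ≤ ‖L ↗χ u‖ := by
  set η : ℝ := (2048 * (N : ℝ) ^ 5)⁻¹
  have hN : (1 : ℝ) ≤ N := by exact_mod_cast NeZero.one_le
  have hη0 : 0 < η := by positivity
  have hη1 : η ≤ 1 := inv_le_one_of_one_le₀ (by nlinarith [one_le_pow₀ hN (n := 5)])
  have hχ1 : χ ≠ 1 := by rintro rfl; simp at hχ
  set X := ‖L ↗χ (1 + η : ℝ)‖
  have htriv : ‖L ↗(1 : DirichletCharacter ℂ N) (1 + η : ℝ)‖ ≤ 2 / η := by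
    refine ((norm_LSeries_le_tsum_rpow_neg 1 (by linarith)).trans
      (tsum_rpow_neg_le_one_add_inv (by linarith))).trans ?_
    rw [add_sub_cancel_left, div_eq_mul_inv, two_mul]
    gcongr
    exact (one_le_inv₀ hη0).2 hη1
  have hX : 4 * N * η ≤ X := by
    by_contra! hlt
    have : (1 : ℝ) < 1 := by
      calc (1 : ℝ) ≤ (2 / η) ^ 3 * X ^ 4 * N := by
            refine (one_le_norm_LSeries_pow_mul χ (u := 1 + η) (by linarith)).trans ?_
            gcongr
            exact norm_LSeries_le hχ (by linarith)
        _ < (2 / η) ^ 3 * (4 * N * η) ^ 4 * N := by gcongr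
        _ = 2048 * N ^ 5 * η := by field_simp; ring
        _ = 1 := mul_inv_cancel₀ (by positivity)
    exact lt_irrefl _ this
  have hlip : ‖L ↗χ (1 + η : ℝ) - L ↗χ u‖ ≤ 2 * N * η := by
    refine (norm_LSeries_sub_le hχ1 (by linarith) hu).trans ?_
    gcongr
    rw [abs_of_nonneg (by linarith)]
    linarith
  nlinarith [norm_sub_norm_le (L ↗χ (1 + η : ℝ)) (L ↗χ u)]

theorem inv_pow_le_of_hasSum_div {h : ℕ →*₀ ℝ} {S : ℝ} (hh : ∀ n, |h n| ≤ 1)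
    (hN : ∀ n, |∑ i ∈ range n, h (i + 1)| ≤ N)
    (hS : HasSum (fun i : ℕ => h (i + 1) / (i + 1 : ℕ)) S) {q : ℕ} (hq : q.Prime)
    (hhq : h q = 0) (hqN : q ≤ N) : ((N : ℝ) ^ (4 * N))⁻¹ ≤ S := by
  have hN2 : (2 : ℝ) ≤ N := by exact_mod_cast hq.two_le.trans hqN
  set M : ℝ := (N : ℝ) ^ (4 * N)
  have hM1 : 1 ≤ M := one_le_pow₀ (by linarith)
  set t : ℝ := 1 - (2 * M)⁻¹
  have hM2 : (2 * M)⁻¹ ≤ 2⁻¹ := inv_anti₀ two_pos (by linarith)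
  have hM0 : 0 < (2 * M)⁻¹ := by positivity
  have hpow (j : ℕ) (hj : j < 4 * N) : (2⁻¹ : ℝ) ≤ t ^ q ^ j := by
    have hqj : ((q ^ j : ℕ) : ℝ) ≤ M := by
      have hle : q ^ j ≤ N ^ (4 * N) :=
        (Nat.pow_le_pow_left hqN j).trans (Nat.pow_le_pow_right (hq.pos.trans_le hqN) hj.le)
      calc ((q ^ j : ℕ) : ℝ) ≤ (N ^ (4 * N) : ℕ) := Nat.cast_le.2 hle
        _ = M := Nat.cast_pow _ _
    calc (2⁻¹ : ℝ) = 1 + M * -(2 * M)⁻¹ := by field_simp; norm_num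
      _ ≤ 1 + (q ^ j : ℕ) * -(2 * M)⁻¹ := by nlinarith
      _ ≤ (1 + -(2 * M)⁻¹) ^ q ^ j := one_add_mul_le_pow (by linarith) _
      _ = t ^ q ^ j := by rw [← sub_eq_add_neg]
  have hsum : (2 * N : ℝ) ≤ ∑ j ∈ range (4 * N), t ^ q ^ j := by
    have := card_nsmul_le_sum (range (4 * N)) _ _ fun j hj => hpow j (mem_range.1 hj)
    rw [card_range, nsmul_eq_mul] at this
    push_cast at this
    linarith
  have hle := sum_pow_prime_pow_sub_le hh hN hS hq hhq (t := t) (by linarith) (by linarith) (4 * N)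
  rw [sub_sub_cancel, div_inv_eq_mul] at hle
  rw [inv_le_iff_one_le_mul₀ (by positivity)]
  nlinarith

/-- The twist `n ↦ χ n * n ^ (-v)` of a quadratic character, as a completely multiplicative
real-valued function. The real part loses nothing, since `χ` takes the values `0` and `±1`. -/
noncomputable def realTwist (hχ : MulChar.IsQuadratic χ) {v : ℝ} (hv : 0 < v) : ℕ →*₀ ℝ where
  toFun n := (χ n).re * (n : ℝ) ^ (-v)
  map_zero' := by simp [Real.zero_rpow (neg_ne_zero.2 hv.ne')]
  map_one' := by simp
  map_mul' m n := by
    have hre : (χ (m * n : ℕ)).re = (χ m).re * (χ n).re := by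
      rw [Nat.cast_mul, map_mul]
      rcases hχ m with hm | hm | hm <;> simp [hm]
    rw [hre, Nat.cast_mul, Real.mul_rpow (by positivity) (by positivity)]
    ring

section RealTwist

variable {v : ℝ} (hχ : MulChar.IsQuadratic χ) (hv : 0 < v)

theorem realTwist_apply (n : ℕ) : realTwist hχ hv n = (χ n).re * (n : ℝ) ^ (-v) := rfl

theorem abs_realTwist_le_one (n : ℕ) : |realTwist hχ hv n| ≤ 1 := by
  rcases n.eq_zero_or_pos with rfl | hn
  · simp
  · rw [realTwist_apply, abs_mul, abs_of_nonneg (a := (n : ℝ) ^ _) (by positivity)]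
    exact mul_le_one₀ ((Complex.abs_re_le_norm _).trans (χ.norm_le_one _)) (by positivity)
      (Real.rpow_le_one_of_one_le_of_nonpos (by exact_mod_cast hn) (by linarith))

theorem abs_sum_range_realTwist_le [NeZero N] (hχ1 : χ ≠ 1) (n : ℕ) :
    |∑ i ∈ range n, realTwist hχ hv (i + 1)| ≤ N := by
  have hle := norm_sum_range_smul_le_of_antitone (antitone_succ_rpow_neg hv.le)
    (fun _ => by positivity) (norm_sum_range_dirichletCharacter_add_le hχ1 1) n
  rw [zero_add, Nat.cast_one, Real.one_rpow, mul_one] at hle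
  refine le_trans (le_of_eq ?_) ((Complex.abs_re_le_norm _).trans hle)
  rw [Complex.re_sum]
  exact congrArg _ (sum_congr rfl fun i _ => by simp [realTwist_apply, mul_comm])

theorem hasSum_realTwist_div :
    HasSum (fun i : ℕ => realTwist hχ hv (i + 1) / (i + 1 : ℕ)) (L ↗χ (v + 1 : ℝ)).re := by
  refine (Complex.hasSum_re (hasSum_smul_LSeries
    (χ.LSeriesSummable_of_one_lt_re (s := (v + 1 : ℝ)) (by simpa)))).congr_fun fun i => ?_
  rw [realTwist_apply, Complex.smul_re, mul_div_assoc, ← Real.rpow_sub_one (by positivity),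
    smul_eq_mul, mul_comm, neg_add, ← sub_eq_add_neg]

end RealTwist

theorem map_minFac_level_eq_zero (χ : DirichletCharacter ℂ N) (hN : N ≠ 1) : χ N.minFac = 0 := by
  refine χ.map_nonunit ?_
  rw [ZMod.isUnit_iff_coprime, Nat.Prime.not_coprime_iff_dvd]
  exact ⟨_, Nat.minFac_prime hN, dvd_rfl, N.minFac_dvd⟩

theorem inv_pow_le_norm_LSeries_of_sq_eq_one [NeZero N] (hχ : χ ≠ 1) (hχ2 : χ ^ 2 = 1)
    (hu : 1 < u) : ((N : ℝ) ^ (4 * N))⁻¹ ≤ ‖L ↗χ u‖ := by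
  have hquad : MulChar.IsQuadratic χ := MulChar.isQuadratic_iff_sq_eq_one.2 hχ2
  have hu0 : 0 < u - 1 := by linarith
  have hN1 : N ≠ 1 := by
    rintro rfl
    exact hχ (DirichletCharacter.level_one χ)
  have hsum := hasSum_realTwist_div hquad hu0
  rw [sub_add_cancel] at hsum
  refine (inv_pow_le_of_hasSum_div (abs_realTwist_le_one hquad hu0)
    (abs_sum_range_realTwist_le hquad hu0 hχ) hsum (Nat.minFac_prime hN1) ?_
    (Nat.minFac_le (NeZero.pos N))).trans (Complex.re_le_norm _)
  rw [realTwist_apply, map_minFac_level_eq_zero χ hN1, Complex.zero_re, zero_mul]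

theorem abs_log_norm_LSeries_le [NeZero N] (hχ : χ ≠ 1) (hu : 1 < u)
    (hu' : u ≤ 1 + ((N : ℝ) ^ (8 * N))⁻¹) : |Real.log ‖L ↗χ u‖| ≤ 8 * N * Real.log N := by
  have hN2 : 2 ≤ N := by
    refine (Nat.two_le_iff N).2 ⟨NeZero.ne N, ?_⟩
    rintro rfl
    exact hχ (DirichletCharacter.level_one χ)
  have hN1 : (1 : ℝ) ≤ N := by exact_mod_cast one_le_two.trans hN2
  have hcube : 2048 * (N : ℝ) ^ 5 ≤ (N : ℝ) ^ (8 * N) := by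
    calc 2048 * (N : ℝ) ^ 5 = 2 ^ 11 * (N : ℝ) ^ 5 := by norm_num
      _ ≤ (N : ℝ) ^ 11 * (N : ℝ) ^ 5 := by gcongr; exact_mod_cast hN2
      _ = (N : ℝ) ^ 16 := by ring
      _ ≤ (N : ℝ) ^ (8 * N) := pow_le_pow_right₀ hN1 (by omega)
  have hlower : ((N : ℝ) ^ (8 * N))⁻¹ ≤ ‖L ↗χ u‖ := by
    by_cases hχ2 : χ ^ 2 = 1
    · exact (inv_anti₀ (by positivity) (pow_le_pow_right₀ hN1 (by omega))).trans
        (inv_pow_le_norm_LSeries_of_sq_eq_one hχ hχ2 hu)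
    · have hanti := inv_anti₀ (by positivity) hcube
      exact hanti.trans (inv_le_norm_LSeries_of_sq_ne_one hχ2 hu (by linarith))
  have hlog := Real.log_le_log (by positivity) hlower
  rw [Real.log_inv, Real.log_pow] at hlog
  push_cast at hlog
  have hlog' := Real.log_le_log ((by positivity : (0 : ℝ) < _).trans_le hlower)
    (norm_LSeries_le hχ hu)
  have hlogN := Real.log_nonneg hN1
  exact abs_le.2 ⟨by linarith, by nlinarith⟩

end LowerBounds

section PrimeSums

open scoped LSeries.notation

variable {N : ℕ} {u v : ℝ}

/-- The prime zeta function `∑ q ^ (-u)`, the sum running over the primes `q`. -/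
noncomputable def primeZeta (u : ℝ) : ℝ :=
  ∑' q : Nat.Primes, ((q : ℕ) : ℝ) ^ (-u)

/-- The prime sum `∑ χ(q) q ^ (-u)`, the leading part of `log L(u, χ)`. -/
noncomputable def characterPrimeSum (χ : DirichletCharacter ℂ N) (u : ℝ) : ℂ :=
  ∑' q : Nat.Primes, ((q : ℕ) : ℝ) ^ (-u) • χ (q : ℕ)

/-- The sum `∑ q ^ (-u)` over the primes `q` in the residue class `a`. -/
noncomputable def residuePrimeSum (a : ZMod N) (u : ℝ) : ℝ :=
  ∑' q : Nat.Primes, if ((q : ℕ) : ZMod N) = a then ((q : ℕ) : ℝ) ^ (-u) else 0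

theorem summable_primes_rpow_neg (hu : 1 < u) :
    Summable fun q : Nat.Primes => ((q : ℕ) : ℝ) ^ (-u) :=
  Nat.Primes.summable_rpow.2 (by linarith)

theorem summable_primes_rpow_neg_smul (χ : DirichletCharacter ℂ N) (hu : 1 < u) :
    Summable fun q : Nat.Primes => ((q : ℕ) : ℝ) ^ (-u) • χ (q : ℕ) := by
  refine Summable.of_norm_bounded (summable_primes_rpow_neg hu) fun q => ?_
  rw [norm_smul, Real.norm_of_nonneg (by positivity)]
  exact mul_le_of_le_one_right (by positivity) (χ.norm_le_one _)

theorem summable_primes_ite_rpow_neg (a : ZMod N) (hu : 1 < u) : Summable fun q : Nat.Primes =>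
    if ((q : ℕ) : ZMod N) = a then ((q : ℕ) : ℝ) ^ (-u) else 0 :=
  Summable.of_nonneg_of_le (fun _ => by positivity)
    (fun _ => by split_ifs; exacts [le_rfl, by positivity]) (summable_primes_rpow_neg hu)

theorem primeZeta_nonneg (u : ℝ) : 0 ≤ primeZeta u :=
  tsum_nonneg fun _ => by positivity

theorem residuePrimeSum_nonneg (a : ZMod N) (u : ℝ) : 0 ≤ residuePrimeSum a u :=
  tsum_nonneg fun _ => by positivity

theorem norm_neg_log_one_sub_sub_le {z : ℂ} (hz : ‖z‖ ≤ 1 / 2) :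
    ‖-Complex.log (1 - z) - z‖ ≤ ‖z‖ ^ 2 := by
  have hlog := Complex.norm_log_one_add_sub_self_le (z := -z) (by rw [norm_neg]; linarith)
  rw [norm_neg, ← sub_eq_add_neg, sub_neg_eq_add, ← norm_neg, neg_add] at hlog
  have hinv : (1 - ‖z‖)⁻¹ ≤ 2 := by
    rw [inv_le_comm₀ (by linarith) two_pos]
    linarith
  calc ‖-Complex.log (1 - z) - z‖ ≤ ‖z‖ ^ 2 * (1 - ‖z‖)⁻¹ / 2 := hlog
    _ ≤ ‖z‖ ^ 2 * 2 / 2 := by gcongr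
    _ = ‖z‖ ^ 2 := by ring

theorem abs_log_norm_LSeries_sub_le [NeZero N] (χ : DirichletCharacter ℂ N) (hu : 1 < u) :
    |Real.log ‖L ↗χ u‖ - (characterPrimeSum χ u).re| ≤ primeZeta 2 := by
  have hre : 1 < (u : ℂ).re := by simpa
  have hlog : Real.log ‖L ↗χ u‖ =
      (∑' q : Nat.Primes, -Complex.log (1 - χ q * (q : ℂ) ^ (-(u : ℂ)))).re := by
    rw [← DirichletCharacter.LSeries_eulerProduct_exp_log χ hre, Complex.norm_exp, Real.log_exp]
  rw [hlog, characterPrimeSum, ← Complex.sub_re,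
    ← (DirichletCharacter.summable_neg_log_one_sub_mul_prime_cpow χ hre).tsum_sub
      (summable_primes_rpow_neg_smul χ hu)]
  refine (Complex.abs_re_le_norm _).trans
    (tsum_of_norm_bounded (summable_primes_rpow_neg one_lt_two).hasSum fun q => ?_)
  have hq2 : (2 : ℝ) ≤ (q : ℕ) := by exact_mod_cast q.2.two_le
  have hz : ‖((q : ℕ) : ℝ) ^ (-u) • χ (q : ℕ)‖ ≤ ((q : ℕ) : ℝ)⁻¹ := by
    rw [norm_smul, Real.norm_of_nonneg (by positivity), ← Real.rpow_neg_one]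
    exact (mul_le_of_le_one_right (by positivity) (χ.norm_le_one _)).trans
      (Real.rpow_le_rpow_of_exponent_le (by linarith) (by linarith))
  have hcast : χ q * (q : ℂ) ^ (-(u : ℂ)) = ((q : ℕ) : ℝ) ^ (-u) • χ (q : ℕ) := by
    rw [Complex.real_smul, Complex.ofReal_cpow (by positivity), mul_comm]
    push_cast
    rfl
  rw [hcast]
  calc _ ≤ ‖((q : ℕ) : ℝ) ^ (-u) • χ (q : ℕ)‖ ^ 2 :=
        norm_neg_log_one_sub_sub_le (hz.trans (by rw [one_div]; exact inv_anti₀ two_pos hq2))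
    _ ≤ ((q : ℕ) : ℝ)⁻¹ ^ 2 := by gcongr
    _ = ((q : ℕ) : ℝ) ^ (-2 : ℝ) := by
        rw [inv_pow, Real.rpow_neg (by positivity), Real.rpow_two]

theorem abs_log_tsum_sub_primeZeta_le (hu : 1 < u) :
    |Real.log (∑' i : ℕ, ((i + 1 : ℕ) : ℝ) ^ (-u)) - primeZeta u| ≤ primeZeta 2 := by
  have hone (b : ZMod 1) : (1 : DirichletCharacter ℂ 1) b = 1 := by
    rw [Subsingleton.elim b 1, map_one]
  have hL : L ↗(1 : DirichletCharacter ℂ 1) u = ((∑' i : ℕ, ((i + 1 : ℕ) : ℝ) ^ (-u) : ℝ) : ℂ) := by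
    rw [← (hasSum_smul_LSeries (DirichletCharacter.LSeriesSummable_of_one_lt_re 1
      (s := u) (by simpa))).tsum_eq, Complex.ofReal_tsum]
    exact tsum_congr fun i => by rw [hone, Complex.real_smul, mul_one]
  have hP : characterPrimeSum (1 : DirichletCharacter ℂ 1) u = primeZeta u := by
    rw [characterPrimeSum, primeZeta, Complex.ofReal_tsum]
    exact tsum_congr fun q => by rw [hone, Complex.real_smul, mul_one]
  have h := abs_log_norm_LSeries_sub_le (1 : DirichletCharacter ℂ 1) hu
  rwa [hL, hP, Complex.ofReal_re, Complex.norm_real,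
    Real.norm_of_nonneg (tsum_nonneg fun _ => by positivity)] at h

theorem neg_log_sub_one_sub_le_primeZeta (hu : 1 < u) :
    -Real.log (u - 1) - primeZeta 2 ≤ primeZeta u := by
  have hlog := Real.log_le_log (inv_pos.2 (sub_pos.2 hu)) (inv_sub_one_le_tsum_rpow_neg hu)
  rw [Real.log_inv] at hlog
  linarith [(abs_le.1 (abs_log_tsum_sub_primeZeta_le hu)).2]

theorem primeZeta_le_log_add (hu : 1 < u) :
    primeZeta u ≤ Real.log (1 + (u - 1)⁻¹) + primeZeta 2 := by
  have hlog := Real.log_le_log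
    ((inv_pos.2 (sub_pos.2 hu)).trans_le (inv_sub_one_le_tsum_rpow_neg hu))
    (tsum_rpow_neg_le_one_add_inv hu)
  linarith [(abs_le.1 (abs_log_tsum_sub_primeZeta_le hu)).1]

theorem primeZeta_sub_le_re_characterPrimeSum_one [NeZero N] (hu : 1 < u) :
    primeZeta u - N ≤ (characterPrimeSum (1 : DirichletCharacter ℂ N) u).re := by
  have hterm (q : Nat.Primes) : ((q : ℕ) : ℝ) ^ (-u) -
      (((q : ℕ) : ℝ) ^ (-u) • (1 : DirichletCharacter ℂ N) (q : ℕ)).re =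
        if (q : ℕ) ∣ N then ((q : ℕ) : ℝ) ^ (-u) else 0 := by
    by_cases hq : (q : ℕ) ∣ N
    · rw [if_pos hq, MulChar.map_nonunit _ (mt (ZMod.isUnit_iff_coprime _ _).1
        (Nat.Prime.not_coprime_iff_dvd.2 ⟨q, q.2, dvd_rfl, hq⟩)), smul_zero, Complex.zero_re,
        sub_zero]
    · rw [if_neg hq, MulChar.one_apply ((ZMod.isUnit_iff_coprime _ _).2
        (q.2.coprime_iff_not_dvd.2 hq)), Complex.smul_re, Complex.one_re, smul_eq_mul, mul_one,
        sub_self]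
  have hsum := (summable_primes_rpow_neg hu).hasSum.sub
    (Complex.hasSum_re (summable_primes_rpow_neg_smul (1 : DirichletCharacter ℂ N) hu).hasSum)
  simp only [hterm] at hsum
  let F : Finset Nat.Primes := N.primeFactors.subtype Nat.Prime
  have hfinite := hsum.unique (hasSum_sum_of_ne_finset_zero (s := F) fun q hq => if_neg fun hqN =>
      hq (mem_subtype.2 (Nat.mem_primeFactors.2 ⟨q.2, hqN, NeZero.ne N⟩)))
  have hcard : F.card ≤ N := by
    refine ((card_subtype _ _).le.trans (card_le_card (t := Icc 1 N) fun q hq => ?_)).trans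
      (Nat.card_Icc 1 N).le
    have hqN := Nat.mem_primeFactors.1 (mem_of_mem_filter q hq)
    exact mem_Icc.2 ⟨hqN.1.one_le, Nat.le_of_dvd (NeZero.pos N) hqN.2.1⟩
  have hle := sum_le_card_nsmul F (fun q => if (q : ℕ) ∣ N then ((q : ℕ) : ℝ) ^ (-u) else 0) 1
    fun q _ => by
      split_ifs
      · exact Real.rpow_le_one_of_one_le_of_nonpos (by exact_mod_cast q.2.one_le) (by linarith)
      · exact zero_le_one
  rw [nsmul_eq_mul, mul_one, ← hfinite] at hle
  have hcast : (F.card : ℝ) ≤ N := by exact_mod_cast hcard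
  exact sub_le_comm.1 (hle.trans hcast)

theorem totient_mul_residuePrimeSum [NeZero N] {a : ZMod N} (ha : IsUnit a) (hu : 1 < u) :
    (N.totient : ℂ) * residuePrimeSum a u =
      ∑ χ : DirichletCharacter ℂ N, χ a⁻¹ * characterPrimeSum χ u := by
  have hmul (χ : DirichletCharacter ℂ N) : χ a⁻¹ * characterPrimeSum χ u =
      ∑' q : Nat.Primes, χ a⁻¹ * (((q : ℕ) : ℝ) ^ (-u) • χ (q : ℕ)) :=
    ((summable_primes_rpow_neg_smul χ hu).tsum_mul_left _).symm
  simp only [hmul]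
  rw [← Summable.tsum_finsetSum fun χ _ => (summable_primes_rpow_neg_smul χ hu).mul_left _,
    residuePrimeSum, Complex.ofReal_tsum, ← tsum_mul_left]
  refine tsum_congr fun q => ?_
  simp only [mul_smul_comm]
  rw [← Finset.smul_sum, DirichletCharacter.sum_char_inv_mul_char_eq ℂ ha]
  by_cases hq : ((q : ℕ) : ZMod N) = a
  · simp [hq, mul_comm]
  · simp [hq, Ne.symm hq]

/- Only the real parts of the prime sums are controlled, so the values `χ a` have to be real. -/
theorem sub_le_mul_residuePrimeSum [NeZero N] {a : ZMod N} (ha : a ^ 2 = 1) (hu : 1 < u)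
    (hu' : u ≤ 1 + ((N : ℝ) ^ (8 * N))⁻¹) :
    -Real.log (u - 1) - N * (8 * N * Real.log N + 2 * primeZeta 2 + 1) ≤
      N * residuePrimeSum a u := by
  have hN : (1 : ℝ) ≤ N := by exact_mod_cast NeZero.one_le
  have hainv : a⁻¹ = a := ZMod.inv_eq_of_mul_eq_one N a a (by rwa [← sq])
  have haunit : IsUnit a := IsUnit.of_mul_eq_one a (by rwa [← sq])
  have hre := congrArg Complex.re (totient_mul_residuePrimeSum haunit hu)
  rw [hainv, ← Complex.ofReal_natCast, Complex.re_ofReal_mul, Complex.ofReal_re, Complex.re_sum,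
    ← add_sum_erase _ _ (mem_univ (1 : DirichletCharacter ℂ N)), MulChar.one_apply haunit,
    one_mul] at hre
  have hnontrivial (χ : DirichletCharacter ℂ N) (hχ : χ ≠ 1) :
      -(8 * N * Real.log N + primeZeta 2) ≤ (χ a * characterPrimeSum χ u).re := by
    have hlog := abs_le.1 (abs_log_norm_LSeries_le hχ hu hu')
    have hsub := abs_le.1 (abs_log_norm_LSeries_sub_le χ hu)
    have hχa : χ a = 1 ∨ χ a = -1 :=
      mul_self_eq_one_iff.1 (by rw [← map_mul, ← sq, ha, map_one])
    rcases hχa with h | h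
    · rw [h, one_mul]
      linarith
    · rw [h, neg_one_mul, Complex.neg_re]
      linarith
  have hsum := card_nsmul_le_sum (univ.erase (1 : DirichletCharacter ℂ N)) _ _
    fun χ hχ => hnontrivial χ (ne_of_mem_erase hχ)
  have hcard : ((univ.erase (1 : DirichletCharacter ℂ N)).card : ℝ) ≤ N := by
    refine Nat.cast_le.2 ((card_erase_le).trans ?_)
    rw [card_univ, ← Nat.card_eq_fintype_card,
      DirichletCharacter.card_eq_totient_of_hasEnoughRootsOfUnity]
    exact N.totient_le
  have hφ : (N.totient : ℝ) * residuePrimeSum a u ≤ N * residuePrimeSum a u :=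
    mul_le_mul_of_nonneg_right (by exact_mod_cast N.totient_le) (residuePrimeSum_nonneg a u)
  rw [nsmul_eq_mul] at hsum
  have hK := primeZeta_nonneg 2
  have hX : 0 ≤ 8 * N * Real.log N + primeZeta 2 :=
    add_nonneg (mul_nonneg (by positivity) (Real.log_nonneg hN)) hK
  linarith [mul_le_mul_of_nonneg_right hcard hX, le_mul_of_one_le_left hK hN,
    neg_log_sub_one_sub_le_primeZeta hu, primeZeta_sub_le_re_characterPrimeSum_one (N := N) hu]

/-- The primes `q ≤ M` in the residue class `a`. -/
noncomputable def primesInClass (a : ZMod N) (M : ℕ) : Finset ℕ :=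
  {q ∈ Icc 1 M | q.Prime ∧ (q : ZMod N) = a}

/- Rankin's trick: `q ^ (-u) ≤ x ^ (v - u) * q ^ (-v)` for `q ≥ x`. -/
theorem residuePrimeSum_le_sum_primesInClass_add (a : ZMod N) {x : ℝ} (hx : 0 < x) (hv : 1 < v)
    (hvu : v ≤ u) :
    residuePrimeSum a u ≤ ∑ q ∈ primesInClass a ⌊x⌋₊, (q : ℝ)⁻¹ + x ^ (v - u) * primeZeta v := by
  have hhead : HasSum (fun q : Nat.Primes =>
      if (q : ℕ) ∈ primesInClass a ⌊x⌋₊ then ((q : ℕ) : ℝ)⁻¹ else 0)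
      (∑ q ∈ primesInClass a ⌊x⌋₊, (q : ℝ)⁻¹) := by
    let F : Finset Nat.Primes := (primesInClass a ⌊x⌋₊).subtype Nat.Prime
    have hF : ∑ q ∈ F, (if (q : ℕ) ∈ primesInClass a ⌊x⌋₊ then ((q : ℕ) : ℝ)⁻¹ else 0) =
        ∑ q ∈ primesInClass a ⌊x⌋₊, (q : ℝ)⁻¹ :=
      (sum_congr rfl fun q hq => if_pos (mem_subtype.1 hq)).trans
        (sum_subtype_of_mem (fun q : ℕ => (q : ℝ)⁻¹) fun q hq => (mem_filter.1 hq).2.1)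
    exact hF ▸ hasSum_sum_of_ne_finset_zero fun q hq => if_neg (mt mem_subtype.2 hq)
  refine hasSum_le (fun q => ?_) (summable_primes_ite_rpow_neg a (hv.trans_le hvu)).hasSum
    (hhead.add ((summable_primes_rpow_neg hv).hasSum.mul_left _))
  have hq1 : (1 : ℝ) ≤ (q : ℕ) := by exact_mod_cast q.2.one_le
  have htail : 0 ≤ x ^ (v - u) * ((q : ℕ) : ℝ) ^ (-v) := by positivity
  split_ifs with ha hq hq
  · refine le_add_of_le_of_nonneg ?_ htail
    rw [← Real.rpow_neg_one]
    exact Real.rpow_le_rpow_of_exponent_le hq1 (by linarith)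
  · have hxq : x ≤ (q : ℕ) := by
      contrapose! hq
      exact mem_filter.2 ⟨mem_Icc.2 ⟨q.2.one_le, Nat.le_floor hq.le⟩, q.2, ha⟩
    rw [zero_add]
    calc ((q : ℕ) : ℝ) ^ (-u) = ((q : ℕ) : ℝ) ^ (v - u) * ((q : ℕ) : ℝ) ^ (-v) := by
          rw [← Real.rpow_add (by linarith)]
          ring_nf
      _ ≤ x ^ (v - u) * ((q : ℕ) : ℝ) ^ (-v) := by
          gcongr ?_ * _
          exact Real.rpow_le_rpow_of_nonpos hx hxq (by linarith)
  all_goals positivity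

end PrimeSums

section ResidueClassSums

variable {θ : ℝ}

theorem eventually_exp_neg_mul_le_one (K : ℝ) :
    ∀ᶠ y : ℝ in atTop, Real.exp (-y) * (4 * y + K) ≤ 1 := by
  have hlim := ((Real.tendsto_pow_mul_exp_neg_atTop_nhds_zero 1).const_mul 4).add
    ((Real.tendsto_pow_mul_exp_neg_atTop_nhds_zero 0).const_mul K)
  rw [mul_zero, mul_zero, add_zero] at hlim
  filter_upwards [hlim.eventually_le_const one_pos] with y hy
  linarith

theorem eventually_residuePrimeSum_sub_one_le_sum : ∀ᶠ L : ℝ in atTop, ∀ (N : ℕ) (a : ZMod N),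
    residuePrimeSum a (1 + Real.exp (-(L / 2))) - 1 ≤
      ∑ q ∈ primesInClass a ⌊Real.exp (Real.exp L)⌋₊, (q : ℝ)⁻¹ := by
  have hY : Tendsto (fun L : ℝ => Real.exp (L / 2) / 2) atTop atTop :=
    (Real.tendsto_exp_atTop.comp (tendsto_id.atTop_div_const two_pos)).atTop_div_const two_pos
  filter_upwards [hY.eventually (eventually_exp_neg_mul_le_one (primeZeta 2))] with L htail N a
  set Y := Real.exp (L / 2) / 2 with hYdef
  have hY0 : 0 < Y := by positivity
  have hexp : Real.exp (-(L / 2)) = (2 * Y)⁻¹ := by rw [Real.exp_neg, hYdef]; ring_nf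
  have hsq : Real.exp L = 4 * Y ^ 2 := by
    rw [hYdef, div_pow, ← Real.exp_nat_mul]
    ring_nf
  have hrankin := residuePrimeSum_le_sum_primesInClass_add a (x := Real.exp (Real.exp L))
    (u := 1 + (2 * Y)⁻¹) (v := 1 + (4 * Y)⁻¹) (Real.exp_pos _)
    (lt_add_of_pos_right _ (by positivity)) (by gcongr; norm_num)
  have hpow : Real.exp (Real.exp L) ^ (1 + (4 * Y)⁻¹ - (1 + (2 * Y)⁻¹)) = Real.exp (-Y) := by
    rw [← Real.exp_mul, hsq]
    congr 1
    field_simp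
    ring
  have hzeta := primeZeta_le_log_add (u := 1 + (4 * Y)⁻¹) (lt_add_of_pos_right _ (by positivity))
  have hlog := Real.log_le_sub_one_of_pos (x := 1 + 4 * Y) (by positivity)
  rw [add_sub_cancel_left, inv_inv] at hzeta
  rw [hpow] at hrankin
  rw [hexp]
  have := mul_le_mul_of_nonneg_left (hzeta.trans (add_le_add_left hlog _)) (Real.exp_pos (-Y)).le
  linarith

theorem eventually_sub_le_mul_sum_inv_primesInClass : ∀ᶠ L : ℝ in atTop,
    ∀ (N : ℕ) [NeZero N] (a : ZMod N), a ^ 2 = 1 →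
      L / 2 - N * (8 * N * Real.log N + 2 * primeZeta 2 + 2) ≤
        N * ∑ q ∈ primesInClass a ⌊Real.exp (Real.exp L)⌋₊, (q : ℝ)⁻¹ := by
  filter_upwards [eventually_residuePrimeSum_sub_one_le_sum] with L htrunc N _ a ha
  have hN : (1 : ℝ) ≤ N := by exact_mod_cast NeZero.one_le
  rcases le_or_gt (8 * N * Real.log N) (L / 2) with hL | hL
  · have hpow : (N : ℝ) ^ (8 * N) ≤ Real.exp (L / 2) := by
      rw [← Real.log_le_iff_le_exp (by positivity), Real.log_pow]
      exact_mod_cast hL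
    have hlower := sub_le_mul_residuePrimeSum ha (u := 1 + Real.exp (-(L / 2)))
      (lt_add_of_pos_right _ (Real.exp_pos _))
      (by rw [Real.exp_neg]; gcongr)
    rw [add_sub_cancel_left, Real.log_exp] at hlower
    nlinarith [htrunc N a]
  · have hrhs : 0 ≤ N * ∑ q ∈ primesInClass a ⌊Real.exp (Real.exp L)⌋₊, (q : ℝ)⁻¹ := by positivity
    have hnonneg : 0 ≤ 8 * N * Real.log N + 2 * primeZeta 2 + 2 := by
      have := mul_nonneg (by positivity : (0 : ℝ) ≤ 8 * N) (Real.log_nonneg hN)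
      linarith [primeZeta_nonneg 2]
    linarith [le_mul_of_one_le_left hnonneg hN, primeZeta_nonneg 2]

theorem eventually_mul_add_le_div_four (hθ : θ < 1) (C : ℝ) : ∀ᶠ L : ℝ in atTop, ∀ N : ℕ,
    N ≠ 0 → (N : ℝ) ^ 2 ≤ L ^ θ → N * (8 * N * Real.log N + C) ≤ L / 4 := by
  have hlittle : (fun L : ℝ => 8 * Real.log L + |C|) =o[atTop] fun L => L ^ (1 - θ) :=
    ((isLittleO_log_rpow_atTop (sub_pos.2 hθ)).const_mul_left 8).add
      (Asymptotics.isLittleO_const_left.2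
        (Or.inr (tendsto_norm_atTop_atTop.comp (tendsto_rpow_atTop (sub_pos.2 hθ)))))
  filter_upwards [hlittle.bound (show (0 : ℝ) < 1 / 4 by norm_num), eventually_ge_atTop 1]
    with L hL hL1 N hN hNL
  have hN1 : (1 : ℝ) ≤ N := by exact_mod_cast Nat.one_le_iff_ne_zero.2 hN
  have hNlog : Real.log N ≤ Real.log L := by
    refine Real.log_le_log (by linarith) ?_
    calc (N : ℝ) ≤ N ^ 2 := le_self_pow₀ hN1 two_ne_zero
      _ ≤ L ^ (1 : ℝ) := hNL.trans (Real.rpow_le_rpow_of_exponent_le hL1 hθ.le)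
      _ = L := Real.rpow_one L
  have hlogN := Real.log_nonneg hN1
  have hlogL := Real.log_nonneg hL1
  calc (N : ℝ) * (8 * N * Real.log N + C) ≤ N ^ 2 * (8 * Real.log L + |C|) := by
        rw [sq, mul_assoc]
        have hNC : C ≤ N * |C| := (le_abs_self C).trans (le_mul_of_one_le_left (abs_nonneg C) hN1)
        have hNN : N * Real.log N ≤ N * Real.log L := by gcongr
        nlinarith [hNC, hNN]
    _ ≤ L ^ θ * (1 / 4 * L ^ (1 - θ)) := by
        rw [Real.norm_of_nonneg (by positivity), Real.norm_of_nonneg (by positivity)] at hL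
        gcongr
    _ = L / 4 := by
        rw [mul_left_comm, ← Real.rpow_add (by linarith), add_sub_cancel, Real.rpow_one]
        ring

theorem eventually_div_le_sum_inv_primesInClass (hθ : θ < 1) : ∀ᶠ x : ℝ in atTop,
    ∀ (N : ℕ) [NeZero N] (a : ZMod N), a ^ 2 = 1 → (N : ℝ) ^ 2 ≤ Real.log (Real.log x) ^ θ →
      Real.log (Real.log x) / (4 * N) ≤ ∑ q ∈ primesInClass a ⌊x⌋₊, (q : ℝ)⁻¹ := by
  have hloglog : Tendsto (fun x => Real.log (Real.log x)) atTop atTop :=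
    Real.tendsto_log_atTop.comp Real.tendsto_log_atTop
  filter_upwards [hloglog.eventually eventually_sub_le_mul_sum_inv_primesInClass,
    hloglog.eventually (eventually_mul_add_le_div_four hθ (2 * primeZeta 2 + 2)),
    Real.tendsto_log_atTop.eventually_gt_atTop 0, eventually_gt_atTop 0]
    with x hsum hsmall hlog hx N _ a ha hN
  rw [Real.exp_log hlog, Real.exp_log hx] at hsum
  have hN0 : (0 : ℝ) < N := by exact_mod_cast NeZero.pos N
  rw [div_le_iff₀ (by positivity)]
  linarith [hsum N a ha, hsmall N (NeZero.ne N) hN]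

end ResidueClassSums

section ExceptionalIntegers

variable {Q : Finset ℕ} {M : ℕ}

theorem card_filter_le_mul_le_sum {ι : Type*} {I : Finset ι} {f : ι → ℝ}
    (hf : ∀ i ∈ I, 0 ≤ f i) (t : ℝ) : #{i ∈ I | t ≤ f i} * t ≤ ∑ i ∈ I, f i := by
  rw [← nsmul_eq_mul]
  exact (card_nsmul_le_sum _ f t fun i hi => (mem_filter.1 hi).2).trans
    (sum_le_sum_of_subset_of_nonneg (filter_subset _ _) fun i hi _ => hf i hi)

theorem sum_Icc_ite_dvd (M d : ℕ) :
    ∑ n ∈ Icc 1 M, (if d ∣ n then (1 : ℝ) else 0) = ((M / d : ℕ) : ℝ) := by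
  rw [← natCast_card_filter, ← Nat.Ioc_filter_dvd_card_eq_div]
  rfl

theorem sum_card_filter_dvd (Q : Finset ℕ) (M : ℕ) :
    ∑ n ∈ Icc 1 M, (#{q ∈ Q | q ∣ n} : ℝ) = ∑ q ∈ Q, ((M / q : ℕ) : ℝ) := by
  simp only [natCast_card_filter]
  rw [sum_comm]
  exact sum_congr rfl fun q _ => sum_Icc_ite_dvd M q

theorem mul_sum_inv_sub_card_le_sum_card_filter_dvd (Q : Finset ℕ) (M : ℕ) :
    M * ∑ q ∈ Q, (q : ℝ)⁻¹ - #Q ≤ ∑ n ∈ Icc 1 M, (#{q ∈ Q | q ∣ n} : ℝ) := by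
  rw [sum_card_filter_dvd, mul_sum, card_eq_sum_ones, Nat.cast_sum, ← sum_sub_distrib]
  refine sum_le_sum fun q _ => ?_
  rw [← div_eq_mul_inv, ← Nat.floor_div_eq_div (K := ℝ), Nat.cast_one]
  exact (Nat.sub_one_lt_floor _).le

theorem sum_card_filter_dvd_sq_le (hQ : (Q : Set ℕ).Pairwise Nat.Coprime) (M : ℕ) :
    ∑ n ∈ Icc 1 M, (#{q ∈ Q | q ∣ n} : ℝ) ^ 2 ≤
      M * (∑ q ∈ Q, (q : ℝ)⁻¹) ^ 2 + M * ∑ q ∈ Q, (q : ℝ)⁻¹ := by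
  have hpairs (n : ℕ) : (#{q ∈ Q | q ∣ n} : ℝ) ^ 2 =
      ∑ q ∈ Q, ∑ r ∈ Q, if Nat.lcm q r ∣ n then 1 else 0 := by
    rw [natCast_card_filter, sq, sum_mul_sum]
    simp only [Nat.lcm_dvd_iff, ite_and, ite_mul, one_mul, zero_mul]
  have hbound : ∀ q ∈ Q, ∀ r ∈ Q, ((M / Nat.lcm q r : ℕ) : ℝ) ≤
      M * ((q : ℝ)⁻¹ * (r : ℝ)⁻¹) + if q = r then M * (q : ℝ)⁻¹ else 0 := by
    intro q hq r hr
    refine Nat.cast_div_le.trans ?_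
    split_ifs with hqr
    · rw [hqr, Nat.lcm_self, div_eq_mul_inv]
      exact le_add_of_nonneg_left (by positivity)
    · rw [(hQ hq hr hqr).lcm_eq_mul, Nat.cast_mul, div_eq_mul_inv, mul_inv, add_zero]
  calc ∑ n ∈ Icc 1 M, (#{q ∈ Q | q ∣ n} : ℝ) ^ 2 =
        ∑ q ∈ Q, ∑ r ∈ Q, ((M / Nat.lcm q r : ℕ) : ℝ) := by
        simp only [hpairs, ← sum_Icc_ite_dvd]
        rw [sum_comm]
        exact sum_congr rfl fun q _ => sum_comm
    _ ≤ ∑ q ∈ Q, ∑ r ∈ Q,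
          (M * ((q : ℝ)⁻¹ * (r : ℝ)⁻¹) + if q = r then M * (q : ℝ)⁻¹ else 0) :=
        sum_le_sum fun q hq => sum_le_sum (hbound q hq)
    _ = M * (∑ q ∈ Q, (q : ℝ)⁻¹) ^ 2 + M * ∑ q ∈ Q, (q : ℝ)⁻¹ := by
        rw [sq, sum_mul_sum]
        simp only [sum_add_distrib, sum_ite_eq, mul_sum, sum_ite_mem, inter_self]

theorem sum_card_filter_dvd_sub_sum_inv_sq_le (hQ : (Q : Set ℕ).Pairwise Nat.Coprime)
    (hQM : Q ⊆ Icc 1 M) :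
    ∑ n ∈ Icc 1 M, (#{q ∈ Q | q ∣ n} - ∑ q ∈ Q, (q : ℝ)⁻¹) ^ 2 ≤ 3 * M * ∑ q ∈ Q, (q : ℝ)⁻¹ := by
  have hfirst := mul_sum_inv_sub_card_le_sum_card_filter_dvd Q M
  have hsecond := sum_card_filter_dvd_sq_le hQ M
  have hcard : (#Q : ℝ) ≤ M := by exact_mod_cast (card_le_card hQM).trans (Nat.card_Icc 1 M).le
  have hexpand (S : ℝ) : ∑ n ∈ Icc 1 M, (#{q ∈ Q | q ∣ n} - S) ^ 2 =
      ∑ n ∈ Icc 1 M, (#{q ∈ Q | q ∣ n} : ℝ) ^ 2 -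
        2 * S * ∑ n ∈ Icc 1 M, (#{q ∈ Q | q ∣ n} : ℝ) + M * S ^ 2 := by
    have hconst : M * S ^ 2 = ∑ n ∈ Icc 1 M, S ^ 2 := by simp
    rw [hconst, mul_sum, ← sum_sub_distrib, ← sum_add_distrib]
    exact sum_congr rfl fun n _ => by ring
  have hS : 0 ≤ ∑ q ∈ Q, (q : ℝ)⁻¹ := by positivity
  rw [hexpand]
  linarith [mul_le_mul_of_nonneg_left hfirst hS, mul_le_mul_of_nonneg_left hcard hS]

theorem card_filter_card_dvd_le_half_sum_inv_le (hQ : (Q : Set ℕ).Pairwise Nat.Coprime)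
    (hQM : Q ⊆ Icc 1 M) (hpos : 0 < ∑ q ∈ Q, (q : ℝ)⁻¹) :
    (#{n ∈ Icc 1 M | (#{q ∈ Q | q ∣ n} : ℝ) ≤ (∑ q ∈ Q, (q : ℝ)⁻¹) / 2} : ℝ) ≤
      12 * M / ∑ q ∈ Q, (q : ℝ)⁻¹ := by
  have hvar := sum_card_filter_dvd_sub_sum_inv_sq_le hQ hQM
  set S := ∑ q ∈ Q, (q : ℝ)⁻¹
  have hsub : #{n ∈ Icc 1 M | (#{q ∈ Q | q ∣ n} : ℝ) ≤ S / 2} ≤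
      #{n ∈ Icc 1 M | (S / 2) ^ 2 ≤ (#{q ∈ Q | q ∣ n} - S) ^ 2} := by
    refine card_le_card (monotone_filter_right _ fun n _ hn => ?_)
    rw [sub_sq_comm]
    gcongr
    linarith
  have hmarkov := (card_filter_le_mul_le_sum (fun n _ => sq_nonneg _) ((S / 2) ^ 2)).trans hvar
  rw [le_div_iff₀ hpos]
  refine (mul_le_mul_of_nonneg_right (Nat.cast_le.2 hsub) hpos.le).trans ?_
  refine le_of_mul_le_mul_right ?_ (show 0 < S / 4 by positivity)
  linarith

theorem sum_card_filter_sq_dvd_le (M : ℕ) :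
    ∑ n ∈ Icc 1 M, (#{q ∈ Ioc 1 M | q ^ 2 ∣ n} : ℝ) ≤ M := by
  simp only [natCast_card_filter]
  rw [sum_comm]
  calc ∑ q ∈ Ioc 1 M, ∑ n ∈ Icc 1 M, (if q ^ 2 ∣ n then (1 : ℝ) else 0)
      ≤ ∑ q ∈ Ioc 1 M, M * ((q : ℝ) ^ 2)⁻¹ := by
        refine sum_le_sum fun q _ => ?_
        rw [sum_Icc_ite_dvd, ← div_eq_mul_inv, ← Nat.cast_pow]
        exact Nat.cast_div_le
    _ ≤ M := by
        rcases M.eq_zero_or_pos with rfl | hM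
        · simp
        · rw [← mul_sum]
          refine mul_le_of_le_one_right (by positivity)
            ((sum_Ioc_inv_sq_le_sub one_ne_zero hM).trans ?_)
          rw [Nat.cast_one, inv_one]
          exact sub_le_self _ (by positivity)

end ExceptionalIntegers

section SumOfDivisors

variable {k m n p q : ℕ}

theorem le_sigma1 (n : ℕ) : n ≤ sigma1 n := by
  rcases eq_or_ne n 0 with rfl | hn
  · exact Nat.zero_le _
  · rw [sigma1, ArithmeticFunction.sigma_one_apply]
    exact single_le_sum (f := fun d => d) (fun _ _ => Nat.zero_le _) (Nat.mem_divisors_self n hn)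

theorem sigma1_prime_mul (hq : q.Prime) (hqn : ¬ q ∣ n) :
    sigma1 (q * n) = (q + 1) * sigma1 n := by
  have hprime := ArithmeticFunction.sigma_one_apply_prime_pow (i := 1) hq
  rw [pow_one, sum_range_succ, sum_range_one, pow_zero, pow_one, add_comm] at hprime
  rw [sigma1, ArithmeticFunction.isMultiplicative_sigma.map_mul_of_coprime
    (hq.coprime_iff_not_dvd.2 hqn), hprime, sigma1]

theorem pow_card_dvd_sigma1 (F : Finset ℕ) :
    ∀ n : ℕ, (∀ q ∈ F, q.Prime ∧ (q : ZMod m) = -1 ∧ q ∣ n ∧ ¬ q ^ 2 ∣ n) → m ^ #F ∣ sigma1 n := by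
  induction F using Finset.induction_on with
  | empty => simp
  | insert q F hqF ih =>
    intro n hF
    obtain ⟨hq, hqm, ⟨n, rfl⟩, hsq⟩ := hF q (mem_insert_self _ _)
    have hqn : ¬ q ∣ n := fun h => hsq (sq q ▸ Nat.mul_dvd_mul_left q h)
    rw [sigma1_prime_mul hq hqn, card_insert_of_notMem hqF, pow_succ']
    refine Nat.mul_dvd_mul ?_ (ih n fun r hr => ?_)
    · rw [← ZMod.natCast_eq_zero_iff, Nat.cast_succ, hqm, neg_add_cancel]
    · obtain ⟨hrp, hrm, hrn, hrsq⟩ := hF r (mem_insert_of_mem hr)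
      have hrq : r.Coprime q := (Nat.coprime_primes hrp hq).2 fun h => hqF (h ▸ hr)
      exact ⟨hrp, hrm, hrq.dvd_of_dvd_mul_left hrn, fun h => hrsq (h.mul_left q)⟩

theorem pow_dvd_sigma1_of_add_card_le {Q : Finset ℕ}
    (hQ : ∀ q ∈ Q, q.Prime ∧ (q : ZMod m) = -1)
    (hcard : k + #{q ∈ Q | q ^ 2 ∣ n} ≤ #{q ∈ Q | q ∣ n}) : m ^ k ∣ sigma1 n := by
  have hunion : #{q ∈ Q | q ∣ n} ≤ #{q ∈ Q | q ∣ n ∧ ¬ q ^ 2 ∣ n} + #{q ∈ Q | q ^ 2 ∣ n} := by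
    refine (card_le_card fun q hq => ?_).trans (card_union_le _ _)
    rw [mem_filter] at hq
    rw [mem_union, mem_filter, mem_filter]
    tauto
  refine (pow_dvd_pow m (by lia)).trans
    (pow_card_dvd_sigma1 {q ∈ Q | q ∣ n ∧ ¬ q ^ 2 ∣ n} n fun q hq => ?_)
  obtain ⟨hqQ, hdvd⟩ := mem_filter.1 hq
  exact ⟨(hQ q hqQ).1, (hQ q hqQ).2, hdvd⟩

theorem KFree.not_pow_dvd_s (hfree : KFree k n) (hp : p.Prime) (hdvd : p ^ k ∣ sigma1 n) :
    ¬ p ^ k ∣ s n := fun hs =>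
  hfree p hp (Nat.sub_sub_self (le_sigma1 n) ▸ Nat.dvd_sub hdvd hs)

end SumOfDivisors

/-- The integers `n ≤ M` divisible by at least `t` squares `q ^ 2` with `q > 1`. As `q ≤ n`, it is
harmless to count only the `q ≤ M`. -/
noncomputable def manySquareDivisors (M : ℕ) (t : ℝ) : Finset ℕ :=
  {n ∈ Icc 1 M | t ≤ (#{q ∈ Ioc 1 M | q ^ 2 ∣ n} : ℝ)}

/-- The integers `n ≤ M` with at most `t` prime divisors in the residue class `a`. -/
noncomputable def fewPrimeDivisorsInClass {m : ℕ} (a : ZMod m) (M : ℕ) (t : ℝ) : Finset ℕ :=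
  {n ∈ Icc 1 M | (#{q ∈ primesInClass a M | q ∣ n} : ℝ) ≤ t}

section PrimePowersDividingSigma

variable {k m M : ℕ} {L R t y θ : ℝ}

theorem prime_of_mem_primesInClass {a : ZMod m} {q : ℕ} (hq : q ∈ primesInClass a M) : q.Prime :=
  (mem_filter.1 hq).2.1

theorem natCast_eq_of_mem_primesInClass {a : ZMod m} {q : ℕ} (hq : q ∈ primesInClass a M) :
    (q : ZMod m) = a :=
  (mem_filter.1 hq).2.2

theorem pairwise_coprime_primesInClass (a : ZMod m) (M : ℕ) :
    (primesInClass a M : Set ℕ).Pairwise Nat.Coprime := fun _ hq _ hr hne =>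
  (Nat.coprime_primes (prime_of_mem_primesInClass hq) (prime_of_mem_primesInClass hr)).2 hne

theorem primesInClass_subset_Ioc (a : ZMod m) (M : ℕ) : primesInClass a M ⊆ Ioc 1 M := fun _ hq =>
  mem_Ioc.2 ⟨(prime_of_mem_primesInClass hq).one_lt, (mem_Icc.1 (mem_of_mem_filter _ hq)).2⟩

theorem card_manySquareDivisors_le (ht : 0 < t) (M : ℕ) :
    #(manySquareDivisors M t) ≤ M / t := by
  rw [le_div_iff₀ ht]
  exact (card_filter_le_mul_le_sum (fun n _ => by positivity) t).trans (sum_card_filter_sq_dvd_le M)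

theorem card_fewPrimeDivisorsInClass_le {a : ZMod m} (ht : 0 < t)
    (hsum : 2 * t ≤ ∑ q ∈ primesInClass a M, (q : ℝ)⁻¹) :
    #(fewPrimeDivisorsInClass a M t) ≤ 6 * M / t := by
  have hturan := card_filter_card_dvd_le_half_sum_inv_le (pairwise_coprime_primesInClass a M)
    ((primesInClass_subset_Ioc a M).trans fun q hq =>
      mem_Icc.2 ⟨(mem_Ioc.1 hq).1.le, (mem_Ioc.1 hq).2⟩) ((by positivity : 0 < 2 * t).trans_le hsum)
  calc (#(fewPrimeDivisorsInClass a M t) : ℝ) ≤ 12 * M / ∑ q ∈ primesInClass a M, (q : ℝ)⁻¹ := by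
        refine (Nat.cast_le.2 (card_le_card ?_)).trans hturan
        exact monotone_filter_right _ fun n _ hn => hn.trans (by linarith)
    _ ≤ 12 * M / (2 * t) := by gcongr
    _ = 6 * M / t := by ring

theorem pow_dvd_sigma1_of_notMem {n : ℕ} (hn : n ∈ Icc 1 M) (hsq : n ∉ manySquareDivisors M t)
    (hprime : n ∉ fewPrimeDivisorsInClass (-1 : ZMod m) M (k + t)) : m ^ k ∣ sigma1 n := by
  have hsq : (#{q ∈ Ioc 1 M | q ^ 2 ∣ n} : ℝ) < t :=
    not_le.1 fun h => hsq (mem_filter.2 ⟨hn, h⟩)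
  have hprime : k + t < (#{q ∈ primesInClass (-1 : ZMod m) M | q ∣ n} : ℝ) :=
    not_le.1 fun h => hprime (mem_filter.2 ⟨hn, h⟩)
  have hsub : #{q ∈ primesInClass (-1 : ZMod m) M | q ^ 2 ∣ n} ≤ #{q ∈ Ioc 1 M | q ^ 2 ∣ n} :=
    card_le_card (filter_subset_filter _ (primesInClass_subset_Ioc _ M))
  refine pow_dvd_sigma1_of_add_card_le (Q := primesInClass (-1 : ZMod m) M) (fun q hq =>
    ⟨prime_of_mem_primesInClass hq, natCast_eq_of_mem_primesInClass hq⟩) ?_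
  refine (Nat.add_le_add_left hsub k).trans ?_
  exact_mod_cast (add_le_add_right hsq.le (k : ℝ)).trans hprime.le

theorem card_filter_not_pow_dvd_sigma1_le (hR : 0 ≤ R) (ht : 0 < t) (hkt : k ≤ t)
    (hsum : ∀ m : ℕ, m ≠ 0 → (m : ℝ) ≤ R →
      4 * t ≤ ∑ q ∈ primesInClass (-1 : ZMod m) M, (q : ℝ)⁻¹) :
    (#{n ∈ Icc 1 M | ∃ m : ℕ, m ≠ 0 ∧ (m : ℝ) ≤ R ∧ ¬ m ^ k ∣ sigma1 n} : ℝ) ≤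
      (1 + 3 * R) * M / t := by
  let few (m : ℕ) : Finset ℕ := fewPrimeDivisorsInClass (-1 : ZMod m) M (2 * t)
  have hsubset : {n ∈ Icc 1 M | ∃ m : ℕ, m ≠ 0 ∧ (m : ℝ) ≤ R ∧ ¬ m ^ k ∣ sigma1 n} ⊆
      manySquareDivisors M t ∪ (Icc 1 ⌊R⌋₊).biUnion few := by
    intro n hn
    obtain ⟨hn, m, hm, hmR, hdvd⟩ := mem_filter.1 hn
    refine mem_union.2 (or_iff_not_imp_left.2 fun hsq => mem_biUnion.2
      ⟨m, mem_Icc.2 ⟨Nat.one_le_iff_ne_zero.2 hm, Nat.le_floor hmR⟩, ?_⟩)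
    have hfew := not_not.1 (mt (pow_dvd_sigma1_of_notMem hn hsq) hdvd)
    exact monotone_filter_right _ (fun _ _ h => h.trans (by linarith)) hfew
  have hfew : ∀ m ∈ Icc 1 ⌊R⌋₊, #(few m) ≤ 3 * M / t := by
    intro m hm
    obtain ⟨hm, hmR⟩ := mem_Icc.1 hm
    have hS := hsum m (Nat.one_le_iff_ne_zero.1 hm) ((Nat.le_floor_iff hR).1 hmR)
    calc (#(few m) : ℝ) ≤ 6 * M / (2 * t) :=
          card_fewPrimeDivisorsInClass_le (by positivity) (by linarith)
      _ = 3 * M / t := by ring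
  calc _ ≤ (#(manySquareDivisors M t) + #((Icc 1 ⌊R⌋₊).biUnion few) : ℝ) := by
        exact_mod_cast (card_le_card hsubset).trans (card_union_le _ _)
    _ ≤ M / t + ∑ m ∈ Icc 1 ⌊R⌋₊, (#(few m) : ℝ) :=
        add_le_add (card_manySquareDivisors_le ht M) (by exact_mod_cast card_biUnion_le)
    _ ≤ M / t + #(Icc 1 ⌊R⌋₊) • (3 * M / t) := by
        gcongr
        exact sum_le_card_nsmul _ _ _ hfew
    _ ≤ M / t + R * (3 * M / t) := by
        rw [nsmul_eq_mul, Nat.card_Icc, Nat.add_sub_cancel]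
        gcongr
        exact Nat.floor_le hR
    _ = (1 + 3 * R) * M / t := by ring

theorem card_filter_sq_le_not_pow_dvd_sigma1_le (hL : 0 < L) (hy : 0 < y)
    (hkL : 8 * k * (1 + y) ≤ L)
    (hsum : ∀ m : ℕ, m ≠ 0 → (m : ℝ) ^ 2 ≤ y →
      L / (4 * m) ≤ ∑ q ∈ primesInClass (-1 : ZMod m) M, (q : ℝ)⁻¹) :
    (#{n ∈ Icc 1 M | ∃ m : ℕ, m ≠ 0 ∧ (m : ℝ) ^ 2 ≤ y ∧ ¬ m ^ k ∣ sigma1 n} : ℝ) ≤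
      56 * (1 + y) / L * M := by
  obtain ⟨R, hR, rfl⟩ : ∃ R : ℝ, 0 < R ∧ R ^ 2 = y := ⟨√y, Real.sqrt_pos.2 hy, Real.sq_sqrt hy.le⟩
  have hsq (m : ℕ) : (m : ℝ) ^ 2 ≤ R ^ 2 ↔ (m : ℝ) ≤ R :=
    pow_le_pow_iff_left₀ m.cast_nonneg hR.le two_ne_zero
  simp only [hsq] at hsum ⊢
  have h2R : 2 * R ≤ 1 + R ^ 2 := by linarith [sq_nonneg (R - 1)]
  have hkt : k ≤ L / (16 * R) := by
    rw [le_div_iff₀ (by positivity)]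
    linarith [mul_le_mul_of_nonneg_left h2R (by positivity : (0 : ℝ) ≤ 8 * k)]
  refine (card_filter_not_pow_dvd_sigma1_le hR.le (by positivity) hkt fun m hm hmR => ?_).trans ?_
  · have hm0 : (0 : ℝ) < m := by exact_mod_cast Nat.pos_of_ne_zero hm
    calc 4 * (L / (16 * R)) = L / (4 * R) := by ring
      _ ≤ L / (4 * m) :=
        div_le_div_of_nonneg_left hL.le (by linarith) (mul_le_mul_of_nonneg_left hmR zero_le_four)
      _ ≤ ∑ q ∈ primesInClass (-1 : ZMod m) M, (q : ℝ)⁻¹ := hsum m hm hmR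
  · calc (1 + 3 * R) * M / (L / (16 * R)) = (8 * (2 * R) + 48 * R ^ 2) / L * M := by
          field_simp
          ring
      _ ≤ 56 * (1 + R ^ 2) / L * M := by
          gcongr
          linarith

theorem eventually_mul_one_add_rpow_le (hθ : θ < 1) (C : ℝ) :
    ∀ᶠ L : ℝ in atTop, C * (1 + L ^ θ) ≤ L := by
  have hlim := (tendsto_inv_atTop_zero.add
    (tendsto_rpow_neg_atTop (sub_pos.2 hθ))).const_mul C
  rw [add_zero, mul_zero] at hlim
  filter_upwards [hlim.eventually_le_const one_pos, eventually_gt_atTop 0] with L hL hL0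
  calc C * (1 + L ^ θ) = C * (L⁻¹ + L ^ (-(1 - θ))) * L := by
        rw [neg_sub, Real.rpow_sub_one hL0.ne']
        field_simp
    _ ≤ L := mul_le_of_le_one_left hL0.le hL

theorem isLittleO_card_filter_of_imp {P Q : ℝ → ℕ → Prop} [∀ x, DecidablePred (P x)]
    [∀ x, DecidablePred (Q x)]
    (hPQ : ∀ x n, P x n → Q x n)
    (hQ : (fun x : ℝ => (#{n ∈ Icc 1 ⌊x⌋₊ | Q x n} : ℝ)) =o[atTop] fun x => x) :
    (fun x : ℝ => (#{n ∈ Icc 1 ⌊x⌋₊ | P x n} : ℝ)) =o[atTop] fun x => x := by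
  refine (Asymptotics.IsBigO.of_norm_le fun x => ?_).trans_isLittleO hQ
  rw [Real.norm_natCast]
  exact_mod_cast card_le_card (monotone_filter_right _ fun n _ => hPQ x n)

theorem isLittleO_card_not_pow_dvd_sigma1 (k : ℕ) (hθ : θ < 1) :
    (fun x : ℝ => (#{n ∈ Icc 1 ⌊x⌋₊ | ∃ m : ℕ, m ≠ 0 ∧
      (m : ℝ) ^ 2 ≤ Real.log (Real.log x) ^ θ ∧ ¬ m ^ k ∣ sigma1 n} : ℝ)) =o[atTop] fun x => x := by
  have hloglog : Tendsto (fun x => Real.log (Real.log x)) atTop atTop :=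
    Real.tendsto_log_atTop.comp Real.tendsto_log_atTop
  refine Asymptotics.isLittleO_iff.2 fun ε hε => ?_
  filter_upwards [eventually_div_le_sum_inv_primesInClass hθ,
    hloglog.eventually (eventually_mul_one_add_rpow_le hθ (8 * k)),
    hloglog.eventually (eventually_mul_one_add_rpow_le hθ (56 / ε)),
    hloglog.eventually_gt_atTop 0, eventually_ge_atTop 0] with x hsum hk hsmall hL hx
  rw [Real.norm_natCast, Real.norm_of_nonneg hx]
  refine (card_filter_sq_le_not_pow_dvd_sigma1_le hL (by positivity) hk fun m hm hmL => ?_).trans ?_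
  · have : NeZero m := ⟨hm⟩
    exact hsum m (-1) neg_one_sq hmL
  · gcongr
    · rw [div_le_iff₀ hL]
      rwa [div_mul_eq_mul_div, div_le_iff₀' hε] at hsmall
    · exact Nat.floor_le hx

end PrimePowersDividingSigma

theorem kfree_implies_no_small_prime_power_in_s_general (k : ℕ) {θ : ℝ} (hθ : θ < 1) :
    (fun x : ℝ => (#{n ∈ Icc 1 ⌊x⌋₊ | KFree k n ∧ ∃ p : ℕ, p.Prime ∧
      (p : ℝ) ^ 2 ≤ Real.log (Real.log x) ^ θ ∧ p ^ k ∣ s n} : ℝ)) =o[atTop] fun x => x :=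
  isLittleO_card_filter_of_imp (fun _ _ ⟨hfree, p, hp, hpx, hdvd⟩ =>
    ⟨p, hp.ne_zero, hpx, fun hσ => hfree.not_pow_dvd_s hp hσ hdvd⟩)
    (isLittleO_card_not_pow_dvd_sigma1 k hθ)

theorem kfree_implies_no_small_prime_power_in_s (k : ℕ) (hk : 2 ≤ k) :
    (fun x : ℝ => (((Finset.Icc 1 ⌊x⌋₊).filter
        (fun n => KFree k n ∧ ∃ p : ℕ, p.Prime ∧
          ((p ^ k : ℕ) : ℝ) ≤ (Real.log (Real.log x)) ^ (0.9 : ℝ) ∧ p ^ k ∣ s n)).card : ℝ))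
      =o[atTop] (fun x : ℝ => x) := by
  refine isLittleO_card_filter_of_imp (fun x n ⟨hfree, p, hp, hpx, hdvd⟩ =>
    ⟨hfree, p, hp, le_trans ?_ hpx, hdvd⟩)
    (kfree_implies_no_small_prime_power_in_s_general k (θ := 0.9) (by norm_num))
  exact_mod_cast Nat.pow_le_pow_right hp.pos hk
end

section
/- Let y be a positive real number, and let n be a positive integer whose largest squarefull divisor is at most y/2. Suppose p is a prime with p > y that divides both n and σ(n). Then there exists a prime q with q ∥ n and q ≡ −1 (mod p). -/
open scoped Classical

/-- A positive integer `r` is squarefull if `p² ∣ r` for every prime `p ∣ r`. -/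
def Squarefull (r : ℕ) : Prop := ∀ p : ℕ, p.Prime → p ∣ r → p ^ 2 ∣ r

/-!
Since `σ` is multiplicative, the prime `p` divides `σ(q ^ a)` for some prime power `q ^ a`
exactly dividing `n`. Prime powers are deficient, so `p ≤ σ(q ^ a) < 2 * q ^ a`. For `2 ≤ a` the
divisor `q ^ a` of `n` is squarefull, which forces `2 * q ^ a ≤ y < p`, a contradiction. Hence
`a = 1` and `p ∣ σ(q) = q + 1`.
-/

theorem squarefull_pow (m : ℕ) {a : ℕ} (ha : 2 ≤ a) : Squarefull (m ^ a) := fun _ hr hrm =>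
  (pow_dvd_pow_of_dvd (hr.dvd_of_dvd_pow hrm) 2).trans (pow_dvd_pow m ha)

theorem exists_mem_primeFactors_dvd_apply_ordProj {R : Type*} [CommMonoidWithZero R]
    {f : ArithmeticFunction R} (hf : f.IsMultiplicative) {n : ℕ} (hn : n ≠ 0) {π : R}
    (hπ : Prime π) (hdvd : π ∣ f n) :
    ∃ q ∈ n.primeFactors, π ∣ f (q ^ n.factorization q) := by
  rwa [hf.multiplicative_factorization f hn, Finsupp.prod, hπ.dvd_finsetProd_iff,
    Nat.support_factorization] at hdvd

theorem deficient_iff_sigma1_lt_two_mul {n : ℕ} : n.Deficient ↔ sigma1 n < 2 * n := by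
  rw [Nat.Deficient, sigma1, ArithmeticFunction.sigma_one_apply,
    Nat.sum_divisors_eq_sum_properDivisors_add_self, two_mul, Nat.add_lt_add_iff_right]

theorem lt_two_mul_of_deficient_of_dvd_sigma1 {m n : ℕ} (hn : n.Deficient) (hdvd : m ∣ sigma1 n) :
    m < 2 * n :=
  (Nat.le_of_dvd (ArithmeticFunction.sigma_pos 1 n hn.pos.ne') hdvd).trans_lt
    (deficient_iff_sigma1_lt_two_mul.1 hn)

theorem sigma1_prime {q : ℕ} (hq : q.Prime) : sigma1 q = q + 1 := by
  rw [sigma1, ArithmeticFunction.sigma_one_apply, hq.sum_divisors]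

theorem int_modEq_neg_one_iff_dvd_add_one {m a : ℤ} : a ≡ -1 [ZMOD m] ↔ m ∣ a + 1 := by
  rw [Int.modEq_comm, Int.modEq_iff_dvd, sub_neg_eq_add]

theorem exact_prime_divisor_neg_one_mod_p_general {n p : ℕ} (hn : n ≠ 0) (hp : p.Prime)
    (hpow : ∀ q a : ℕ, q.Prime → 2 ≤ a → q ^ a ∣ n → 2 * q ^ a ≤ p) (hps : p ∣ sigma1 n) :
    ∃ q : ℕ, q.Prime ∧ q ∣ n ∧ ¬ q ^ 2 ∣ n ∧ (q : ℤ) ≡ -1 [ZMOD (p : ℤ)] := by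
  obtain ⟨q, hq, hpq⟩ : ∃ q ∈ n.primeFactors, p ∣ sigma1 (q ^ n.factorization q) :=
    exists_mem_primeFactors_dvd_apply_ordProj ArithmeticFunction.isMultiplicative_sigma hn
      hp.prime hps
  obtain ⟨hqprime, hqn, -⟩ := Nat.mem_primeFactors.1 hq
  have hlt : p < 2 * q ^ n.factorization q :=
    lt_two_mul_of_deficient_of_dvd_sigma1 hqprime.deficient_pow hpq
  have hexp_lt : n.factorization q < 2 := by
    by_contra! hexp
    exact hlt.not_ge (hpow q _ hqprime hexp (Nat.ordProj_dvd n q))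
  have hexp : n.factorization q = 1 :=
    le_antisymm (Nat.lt_succ_iff.1 hexp_lt) (hqprime.factorization_pos_of_dvd hn hqn)
  rw [hexp, pow_one, sigma1_prime hqprime] at hpq
  exact ⟨q, hqprime, hqn, fun hsq =>
    hexp_lt.not_ge ((hqprime.pow_dvd_iff_le_factorization hn).1 hsq),
    int_modEq_neg_one_iff_dvd_add_one.2 (mod_cast hpq)⟩

theorem exact_prime_divisor_neg_one_mod_p (y : ℝ) (hy : 0 < y) (n : ℕ) (hn : 0 < n)
    (hsf : ∀ r : ℕ, Squarefull r → r ∣ n → (r : ℝ) ≤ y / 2)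
    (p : ℕ) (hp : p.Prime) (hpy : y < (p : ℝ)) (hpn : p ∣ n) (hps : p ∣ sigma1 n) :
    ∃ q : ℕ, q.Prime ∧ q ∣ n ∧ ¬ q ^ 2 ∣ n ∧ (q : ℤ) ≡ -1 [ZMOD (p : ℤ)] := by
  refine exact_prime_divisor_neg_one_mod_p_general hn.ne' hp (fun q a _ ha hqa => ?_) hps
  exact_mod_cast show 2 * ((q ^ a : ℕ) : ℝ) ≤ p by linarith [hsf _ (squarefull_pow q ha) hqa]
end
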